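/- Let E be a real Banach space, let S : E → E be a compact continuous linear operator, and let t ∈ ℝ, t ≠ 0, be such that 1/t is an eigenvalue of S whose algebraic multiplicity — the dimension of the generalized eigenspace ⋃_{n≥1} ker((1/t)·I − S)^n, which is finite since S is compact — is odd. Let G : E → E be a continuous compact map satisfying ‖G(u)‖/‖u‖ → 0 as ‖u‖ → 0, and let Σ be the closure in ℝ × E of the set {(s,u) ∈ ℝ × E : u = s·S(u) + G(u), u ≠ 0}. Then the connected component C of Σ ∪ {(t,0)} containing the point (t,0) satisfies at least one of the following: (i) C is unbounded in ℝ × E; (ii) there exists t̂ ≠ t such that (t̂,0) ∈ C and 1/t̂ is an eigenvalue of S. -/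

import Mathlib

open Filter Topology

/-!
Treat the parameter as an unknown and consider the Brouwer degree of
`(s, u) ↦ (‖u‖ - r, u - s S(u) - G(u))`. If the component of `(t, 0)` is bounded and meets the
trivial line only at `(t, 0)`, it lies in a bounded open set `Ω` without points of `Σ` on its
frontier. Raising `r` until no zero is left shows that the degree on `Ω` vanishes. For small `r`,
however, all zeros lie in a box around `(t, 0)`, on which the map is homotopic to
`(s, u) ↦ ((ε / 2)² - (s - t)², u - s S(u))`. The Jacobian of the latter is
`-2 (s - t) det (1 - s S)`, and odd multiplicity means that the determinant changes sign at `t`, so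
the two zeros `(t ± ε / 2, 0)` count with the same sign and the degree is `±2`.

A degree is never constructed: vanishing of the integrals `∫ φ(f) det Df`, which compute it,
suffices. Compactness brings the problem to finite dimension. A linear automorphism turns
`u - s S(u)` into a finite rank perturbation of the identity plus a compact term of size `s - t`,
and the compact remainder is approximated by maps of finite rank.
-/

section Cramer

variable {R V ι : Type*} [CommRing R] [AddCommGroup V] [Module R V] [Fintype ι] [DecidableEq ι]

lemma sum_det_update_smul (b : Module.Basis ι R V) (v : ι → V) (y : V) :
    ∑ i, b.det (Function.update v i y) • v i = b.det v • y := by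
  refine b.ext_elem fun k => ?_
  have cramer := congrFun (Matrix.mulVec_cramer (b.toMatrix v) (b.repr y)) k
  simp only [Matrix.mulVec, dotProduct, Matrix.cramer_apply, Pi.smul_apply, smul_eq_mul] at cramer
  simp only [map_sum, map_smul, Finsupp.coe_finsetSum, Finset.sum_apply, Finsupp.smul_apply,
    smul_eq_mul, Module.Basis.det_apply, Module.Basis.toMatrix_update, ← cramer]
  exact Finset.sum_congr rfl fun i _ => mul_comm _ _

lemma det_update_update_swap (b : Module.Basis ι R V) (v : ι → V) {i k : ι} (hik : i ≠ k)
    (y z : V) :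
    b.det (Function.update (Function.update v i y) k z) =
      -b.det (Function.update (Function.update v k y) i z) := by
  rw [← b.det.map_swap _ hik]
  congr 1
  ext j
  simp only [Function.comp, Equiv.swap_apply_def, Function.update_apply]
  split_ifs <;> simp_all

lemma sum_sum_det_update_update_eq_zero [IsAddTorsionFree R] (b : Module.Basis ι R V) (v : ι → V)
    (y : V) (H : ι → ι → V) (hH : ∀ i k, H i k = H k i) :
    ∑ i, ∑ k ∈ Finset.univ.erase i,
      b.det (Function.update (Function.update v i y) k (H i k)) = 0 := by
  refine self_eq_neg.1 ?_
  calc ∑ i, ∑ k ∈ Finset.univ.erase i, b.det (Function.update (Function.update v i y) k (H i k))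
      = ∑ k, ∑ i ∈ Finset.univ.erase k,
          b.det (Function.update (Function.update v i y) k (H i k)) :=
        Finset.sum_comm' fun i k => by simp [eq_comm]
    _ = ∑ k, ∑ i ∈ Finset.univ.erase k,
          -b.det (Function.update (Function.update v k y) i (H k i)) :=
        Finset.sum_congr rfl fun k _ => Finset.sum_congr rfl fun i hi => by
          rw [det_update_update_swap b v (Finset.ne_of_mem_erase hi), hH]
    _ = _ := by simp only [Finset.sum_neg_distrib]

end Cramer

section Piola

variable {V ι : Type*} [NormedAddCommGroup V] [NormedSpace ℝ V] [FiniteDimensional ℝ V]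
  [Fintype ι] [DecidableEq ι]

/-- The determinant of a family of vectors with respect to a basis of a finite-dimensional real
normed space, bundled as a continuous multilinear map so that it can be differentiated. -/
noncomputable def basisDet (b : Module.Basis ι ℝ V) :
    ContinuousMultilinearMap ℝ (fun _ : ι => V) ℝ where
  toMultilinearMap := b.det.toMultilinearMap
  cont := by
    have hcoord (i : ι) : Continuous (b.coord i) := LinearMap.continuous_of_finiteDimensional _
    change Continuous fun v : ι → V => b.det v
    simp only [Module.Basis.det_apply]
    exact Continuous.matrix_det <| continuous_pi fun i => continuous_pi fun j =>
      (hcoord i).comp (continuous_apply j)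

lemma basisDet_apply (b : Module.Basis ι ℝ V) (v : ι → V) : basisDet b v = b.det v := rfl

lemma basisDet_map_basis (b : Module.Basis ι ℝ V) (L : V →L[ℝ] V) :
    basisDet b (fun k => L (b k)) = L.det := by
  simpa [Function.comp_def, basisDet_apply, b.det_self, ContinuousLinearMap.det] using
    b.det_comp (L : V →ₗ[ℝ] V) b

/-- The `i`-th coordinate, with respect to the basis `b`, of the vector field `adj (Df) h`; by
Cramer's rule it is the determinant of `Df` with the `i`-th column replaced by `h`. -/
noncomputable def cofactorField (b : Module.Basis ι ℝ V) (f h : V → V) (i : ι) (x : V) : ℝ :=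
  basisDet b (Function.update (fun k => fderiv ℝ f x (b k)) i (h x))

variable {b : Module.Basis ι ℝ V} {f h : V → V}

lemma sum_cofactorField_smul (x : V) :
    ∑ i, cofactorField b f h i x • fderiv ℝ f x (b i) = (fderiv ℝ f x).det • h x := by
  simp only [cofactorField, basisDet_apply, sum_det_update_smul, ← basisDet_map_basis b]

lemma contDiff_cofactorField (hf : ContDiff ℝ 2 f) (hh : ContDiff ℝ 1 h) (i : ι) :
    ContDiff ℝ 1 (cofactorField b f h i) := by
  refine (basisDet b).contDiff.comp (contDiff_pi.2 fun k => ?_)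
  rcases eq_or_ne k i with rfl | hk
  · simpa using hh
  · simpa [hk] using (hf.fderiv_right (m := 1) (by norm_num)).clm_apply contDiff_const

lemma fderiv_cofactorField_apply (hf : ContDiff ℝ 2 f) (hh : ContDiff ℝ 1 h) (i : ι) (x w : V) :
    fderiv ℝ (cofactorField b f h i) x w =
      basisDet b (Function.update (fun k => fderiv ℝ f x (b k)) i (fderiv ℝ h x w)) +
      ∑ k ∈ Finset.univ.erase i, basisDet b (Function.update
        (Function.update (fun k => fderiv ℝ f x (b k)) i (h x)) k
        (fderiv ℝ (fderiv ℝ f) x w (b k))) := by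
  have hDf : DifferentiableAt ℝ (fderiv ℝ f) x :=
    (hf.fderiv_right (m := 1) (by norm_num)).differentiable one_ne_zero x
  have hcolumn (k : ι) : HasFDerivAt
      (fun x => Function.update (fun k => fderiv ℝ f x (b k)) i (h x) k)
      (if k = i then fderiv ℝ h x else (fderiv ℝ (fderiv ℝ f) x).flip (b k)) x := by
    rcases eq_or_ne k i with rfl | hk
    · simpa using (hh.differentiable one_ne_zero x).hasFDerivAt
    · simpa [hk] using hDf.hasFDerivAt.clm_apply (hasFDerivAt_const (b k) x)
  have hcofactor := HasFDerivAt.multilinear_comp (basisDet b) hcolumn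
  rw [show fderiv ℝ (cofactorField b f h i) x = _ from hcofactor.fderiv]
  simp only [sum_apply, ContinuousLinearMap.comp_apply,
    ContinuousMultilinearMap.toContinuousLinearMap_apply]
  rw [← Finset.add_sum_erase _ _ (Finset.mem_univ i)]
  refine congrArg₂ _ (by simp) (Finset.sum_congr rfl fun k hk => ?_)
  simp [Finset.ne_of_mem_erase hk]

/-- The Piola identity: the second derivatives of `f` cancel by symmetry. -/
lemma sum_fderiv_cofactorField (hf : ContDiff ℝ 2 f) (hh : ContDiff ℝ 1 h) (x : V) :
    ∑ i, fderiv ℝ (cofactorField b f h i) x (b i) =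
      (basisDet b).linearDeriv (fun k => fderiv ℝ f x (b k)) (fun k => fderiv ℝ h x (b k)) := by
  have hsymm := hf.contDiffAt (x := x) |>.isSymmSndFDerivAt (by simp)
  simp only [fderiv_cofactorField_apply hf hh, Finset.sum_add_distrib, basisDet_apply,
    ContinuousMultilinearMap.linearDeriv_apply]
  rw [sum_sum_det_update_update_eq_zero b _ _ _ fun i k => hsymm (b i) (b k), add_zero]

end Piola

section Calculus

open MeasureTheory

variable {V : Type*} [NormedAddCommGroup V] [NormedSpace ℝ V]

lemma fderiv_add_smul {g h : V → V} (hg : Differentiable ℝ g) (hh : Differentiable ℝ h) (τ : ℝ)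
    (x : V) : fderiv ℝ (g + τ • h) x = fderiv ℝ g x + τ • fderiv ℝ h x := by
  rw [fderiv_add (hg x) ((hh x).const_smul τ), fderiv_const_smul (hh x)]

lemma hasDerivAt_integral_of_contDiff [MeasurableSpace V] [BorelSpace V] {μ : Measure V}
    [IsFiniteMeasureOnCompacts μ] {F : ℝ × V → ℝ} (hF : ContDiff ℝ 1 F) {K : Set V}
    (hK : IsCompact K) (hFK : ∀ τ, ∀ x ∉ K, F (τ, x) = 0) (τ : ℝ) :
    HasDerivAt (fun τ => ∫ x, F (τ, x) ∂μ) (∫ x, deriv (fun τ => F (τ, x)) τ ∂μ) τ := by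
  have hderiv (τ : ℝ) (x : V) :
      HasDerivAt (fun τ => F (τ, x)) (fderiv ℝ F (τ, x) (1, 0)) τ :=
    (hF.differentiable one_ne_zero (τ, x)).hasFDerivAt.comp_hasDerivAt τ
      ((hasDerivAt_id τ).prodMk (hasDerivAt_const τ x))
  have hF' : Continuous fun p : ℝ × V => fderiv ℝ F p (1, 0) :=
    (hF.continuous_fderiv one_ne_zero).clm_apply continuous_const
  have hF'K (τ : ℝ) (x : V) (hx : x ∉ K) : fderiv ℝ F (τ, x) (1, 0) = 0 := by
    rw [← (hderiv τ x).deriv]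
    simp [hFK _ x hx]
  have hint (τ : ℝ) : Integrable (fun x => F (τ, x)) μ :=
    (hF.continuous.comp (Continuous.prodMk_right τ)).integrable_of_hasCompactSupport
      (HasCompactSupport.intro hK (hFK τ))
  obtain ⟨M, hM⟩ := ((isCompact_Icc (a := τ - 1) (b := τ + 1)).prod
    hK).exists_bound_of_continuousOn hF'.continuousOn
  simp only [(hderiv τ _).deriv]
  refine (hasDerivAt_integral_of_dominated_loc_of_deriv_le (s := Set.Icc (τ - 1) (τ + 1))
    (bound := K.indicator fun _ => M) (Icc_mem_nhds (by linarith) (by linarith))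
    (Eventually.of_forall fun τ => (hint τ).aestronglyMeasurable) (hint τ)
    (hF'.comp (Continuous.prodMk_right τ)).aestronglyMeasurable
    (Eventually.of_forall fun x τ' hτ' => ?_)
    ((integrable_indicator_iff hK.measurableSet).2 (integrableOn_const hK.measure_lt_top.ne))
    (Eventually.of_forall fun x τ' _ => hderiv τ' x)).2
  by_cases hx : x ∈ K
  · simpa [hx] using hM (τ', x) ⟨hτ', hx⟩
  · simp [hx, hF'K]

end Calculus

section JacobianIntegral

open MeasureTheory

variable {V : Type*} [NormedAddCommGroup V] [NormedSpace ℝ V] [FiniteDimensional ℝ V]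

/-- The integrand `χ · φ(f) · det Df`. For a bump function `φ` of integral one around `0` and a
cutoff `χ` of a region `U`, its integral is the Brouwer degree of `f` on `U` at `0`. -/
noncomputable def weightedJacobian (χ φ : V → ℝ) (f : V → V) (x : V) : ℝ :=
  χ x * φ (f x) * (fderiv ℝ f x).det

variable {χ φ : V → ℝ} {f g h : V → V}

section Divergence

variable {ι : Type*} [Fintype ι] [DecidableEq ι] {b : Module.Basis ι ℝ V}

lemma sum_fderiv_cutoff_mul_cofactorField (hf : ContDiff ℝ 2 f) (hh : ContDiff ℝ 1 h)
    (hχ : ContDiff ℝ 1 χ) (hφ : ContDiff ℝ 1 φ) {x : V}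
    (hx : φ (f x) ≠ 0 → fderiv ℝ χ x = 0) :
    ∑ i, fderiv ℝ (fun y => χ y * φ (f y) * cofactorField b f h i y) x (b i) =
      χ x * (fderiv ℝ φ (f x) (h x) * (fderiv ℝ f x).det + φ (f x) *
        (basisDet b).linearDeriv (fun k => fderiv ℝ f x (b k)) (fun k => fderiv ℝ h x (b k))) := by
  have hφf : HasFDerivAt (fun y => φ (f y)) (fderiv ℝ φ (f x) ∘L fderiv ℝ f x) x :=
    (hφ.differentiable one_ne_zero (f x)).hasFDerivAt.comp x
      (hf.differentiable two_ne_zero x).hasFDerivAt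
  have hproduct (i : ι) : fderiv ℝ (fun y => χ y * φ (f y) * cofactorField b f h i y) x (b i) =
      χ x * φ (f x) * fderiv ℝ (cofactorField b f h i) x (b i) +
        χ x * fderiv ℝ φ (f x) (cofactorField b f h i x • fderiv ℝ f x (b i)) := by
    have hcutoff : φ (f x) * fderiv ℝ χ x (b i) = 0 := by
      by_cases h0 : φ (f x) = 0 <;> simp [h0, hx]
    have hleibniz := (((hχ.differentiable one_ne_zero x).hasFDerivAt.mul hφf).mul
      ((contDiff_cofactorField (b := b) hf hh i).differentiable one_ne_zero x).hasFDerivAt).fderiv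
    simp only [Pi.mul_def] at hleibniz
    simp only [hleibniz, add_apply, smul_apply, ContinuousLinearMap.comp_apply, smul_eq_mul,
      map_smul]
    linear_combination cofactorField b f h i x * hcutoff
  simp only [hproduct, Finset.sum_add_distrib, ← Finset.mul_sum]
  rw [sum_fderiv_cofactorField hf hh, ← map_sum, sum_cofactorField_smul, map_smul, smul_eq_mul]
  ring

lemma hasDerivAt_weightedJacobian_add_smul (hg : ContDiff ℝ 2 g) (hh : ContDiff ℝ 2 h)
    (hχ : ContDiff ℝ 1 χ) (hφ : ContDiff ℝ 1 φ) (b : Module.Basis ι ℝ V) {τ : ℝ} {x : V}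
    (hx : φ ((g + τ • h) x) ≠ 0 → fderiv ℝ χ x = 0) :
    HasDerivAt (fun τ : ℝ => weightedJacobian χ φ (g + τ • h) x)
      (∑ i, fderiv ℝ (fun y => χ y * φ ((g + τ • h) y) * cofactorField b (g + τ • h) h i y) x
        (b i)) τ := by
  have hvalue : HasDerivAt (fun τ : ℝ => (g + τ • h) x) (h x) τ := by
    simpa using ((hasDerivAt_id τ).smul_const (h x)).const_add (g x)
  have hcolumns : HasDerivAt (fun τ : ℝ => fun k => fderiv ℝ (g + τ • h) x (b k))
      (fun k => fderiv ℝ h x (b k)) τ := by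
    refine hasDerivAt_pi.2 fun k => ?_
    simpa [fderiv_add_smul (hg.differentiable two_ne_zero) (hh.differentiable two_ne_zero)] using
      ((hasDerivAt_id τ).smul_const (fderiv ℝ h x (b k))).const_add (fderiv ℝ g x (b k))
  have hproduct := (((hφ.differentiable one_ne_zero _).hasFDerivAt.comp_hasDerivAt τ
    hvalue).const_mul (χ x)).mul (((basisDet b).hasFDerivAt _).comp_hasDerivAt τ hcolumns)
  have hf : ContDiff ℝ 2 (g + τ • h) := hg.add (contDiff_const.smul hh)
  rw [sum_fderiv_cutoff_mul_cofactorField hf (hh.of_le one_le_two) hχ hφ hx]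
  simp only [weightedJacobian, ← basisDet_map_basis b]
  refine hproduct.congr_deriv ?_
  simp only [Function.comp]
  ring

end Divergence

lemma contDiff_clm_det {X : Type*} [NormedAddCommGroup X] [NormedSpace ℝ X] {n : WithTop ℕ∞}
    {A : X → V →L[ℝ] V} (hA : ContDiff ℝ n A) : ContDiff ℝ n fun x => (A x).det := by
  let b := Module.finBasis ℝ V
  simp only [← basisDet_map_basis b]
  exact (basisDet b).contDiff.comp <| contDiff_pi.2 fun k => hA.clm_apply contDiff_const

variable [MeasurableSpace V] [BorelSpace V] {μ : Measure V}

lemma integral_fderiv_apply_eq_zero [μ.IsAddHaarMeasure] {Y : V → ℝ} (hY : ContDiff ℝ 1 Y)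
    (hc : HasCompactSupport Y) (v : V) :
    ∫ x, fderiv ℝ Y x v ∂μ = 0 := by
  have hint : Integrable (fun x => fderiv ℝ Y x v) μ :=
    ((hY.continuous_fderiv one_ne_zero).clm_apply
      continuous_const).integrable_of_hasCompactSupport (hc.fderiv_apply (𝕜 := ℝ) v)
  simpa using integral_mul_fderiv_eq_neg_fderiv_mul_of_integrable (μ := μ) (𝕜 := ℝ)
    (f := fun _ => (1 : ℝ)) (g := Y) (v := v) (by simp) (by simpa using hint)
    (by simpa using hY.continuous.integrable_of_hasCompactSupport hc) (by simp)
    fun x _ => hY.differentiable one_ne_zero x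

lemma integral_sum_fderiv_apply_eq_zero [μ.IsAddHaarMeasure] {ι : Type*} [Fintype ι]
    {Y : ι → V → ℝ} (hY : ∀ i, ContDiff ℝ 1 (Y i)) (hc : ∀ i, HasCompactSupport (Y i))
    (v : ι → V) :
    ∫ x, ∑ i, fderiv ℝ (Y i) x (v i) ∂μ = 0 := by
  rw [integral_finsetSum]
  · exact Finset.sum_eq_zero fun i _ => integral_fderiv_apply_eq_zero (hY i) (hc i) (v i)
  · exact fun i _ => (((hY i).continuous_fderiv one_ne_zero).clm_apply
      continuous_const).integrable_of_hasCompactSupport ((hc i).fderiv_apply (𝕜 := ℝ) (v i))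

lemma integral_weightedJacobian_add_eq [μ.IsAddHaarMeasure]
    (hg : ContDiff ℝ 2 g) (hh : ContDiff ℝ 2 h) (hχ : ContDiff ℝ 1 χ) (hχc : HasCompactSupport χ)
    (hφ : ContDiff ℝ 1 φ)
    (hcutoff : ∀ τ ∈ Set.Icc (0 : ℝ) 1, ∀ x, φ ((g + τ • h) x) ≠ 0 → fderiv ℝ χ x = 0) :
    ∫ x, weightedJacobian χ φ (g + h) x ∂μ = ∫ x, weightedJacobian χ φ g x ∂μ := by
  let b := Module.finBasis ℝ V
  have hf (τ : ℝ) : ContDiff ℝ 2 (g + τ • h) := hg.add (contDiff_const.smul hh)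
  have hfderiv := fderiv_add_smul (hg.differentiable two_ne_zero) (hh.differentiable two_ne_zero)
  have hsmooth : ContDiff ℝ 1 fun p : ℝ × V => weightedJacobian χ φ (g + p.1 • h) p.2 := by
    have hg1 := hg.of_le one_le_two
    have hh1 := hh.of_le one_le_two
    have : ContDiff ℝ 1 (fderiv ℝ g) := hg.fderiv_right (by norm_num)
    have : ContDiff ℝ 1 (fderiv ℝ h) := hh.fderiv_right (by norm_num)
    have hdet : ContDiff ℝ 1 fun p : ℝ × V => (fderiv ℝ g p.2 + p.1 • fderiv ℝ h p.2).det :=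
      contDiff_clm_det (by fun_prop)
    simp only [weightedJacobian, hfderiv, Pi.add_apply, Pi.smul_apply]
    fun_prop
  have hderiv := hasDerivAt_integral_of_contDiff (μ := μ) hsmooth hχc fun τ x hx => by
    simp [weightedJacobian, image_eq_zero_of_notMem_tsupport hx]
  have hderiv_zero (τ : ℝ) (hτ : τ ∈ Set.Icc (0 : ℝ) 1) :
      ∫ x, deriv (fun τ : ℝ => weightedJacobian χ φ (g + τ • h) x) τ ∂μ = 0 := by
    have hdivergence (x : V) := (hasDerivAt_weightedJacobian_add_smul hg hh hχ hφ b
      (hcutoff τ hτ x)).deriv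
    simp only [hdivergence]
    exact integral_sum_fderiv_apply_eq_zero
      (fun i => (hχ.mul (hφ.comp ((hf τ).of_le one_le_two))).mul
        (contDiff_cofactorField (hf τ) (hh.of_le one_le_two) i))
      (fun i => hχc.mul_right.mul_right) b
  have hconst := constant_of_has_deriv_right_zero (a := 0) (b := 1)
    (fun τ _ => (hderiv τ).continuousAt.continuousWithinAt)
    (fun τ hτ => by
      simpa only [hderiv_zero τ ⟨hτ.1, hτ.2.le⟩] using (hderiv τ).hasDerivWithinAt)
  simpa using hconst 1 (by simp)

end JacobianIntegral

section ZeroDegree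

open MeasureTheory

open scoped Manifold in
lemma exists_contDiff_cutoff {V : Type*} [NormedAddCommGroup V] [NormedSpace ℝ V]
    [FiniteDimensional ℝ V] {Z U : Set V} (hZ : IsClosed Z) (hU : IsOpen U) (hZU : Z ⊆ U) :
    ∃ χ : V → ℝ, ContDiff ℝ 1 χ ∧ (∀ x ∉ U, χ x = 0) ∧ ∃ U₁, IsOpen U₁ ∧ Z ⊆ U₁ ∧
      ∀ x ∈ U₁, χ x = 1 := by
  obtain ⟨χ, hχ1, hχ0, -⟩ := exists_contMDiffMap_one_nhds_of_subset_interior 𝓘(ℝ, V) (n := 1)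
    hZ (t := U) (by rwa [hU.interior_eq])
  obtain ⟨U₁, hU₁, hZU₁, hχU₁⟩ := eventually_nhdsSet_iff_exists.1 hχ1
  exact ⟨χ, χ.contMDiff.contDiff, hχ0, U₁, hU₁, hZU₁, hχU₁⟩

lemma exists_pos_forall_comp_eq_zero {X V : Type*} [TopologicalSpace X] [NormedAddCommGroup V]
    {f : X → V} (hf : Continuous f) {K : Set X} (hK : IsCompact K) (hne : ∀ x ∈ K, f x ≠ 0) :
    ∃ δ > 0, ∀ x ∈ K, ∀ y, dist y (f x) < δ → ∀ φ : V → ℝ, (∀ z, δ ≤ ‖z‖ → φ z = 0) →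
      φ y = 0 := by
  obtain ⟨m, hm, hmf⟩ := hK.exists_forall_le' hf.norm.continuousOn (a := 0)
    fun x hx => norm_pos_iff.2 (hne x hx)
  refine ⟨m / 2, half_pos hm, fun x hx y hy φ hφ => hφ _ ?_⟩
  have := norm_sub_norm_le (f x) y
  rw [dist_comm, dist_eq_norm] at hy
  linarith [hmf x hx]

lemma exists_cutoff_of_homotopy {V : Type*} [NormedAddCommGroup V] [NormedSpace ℝ V]
    [FiniteDimensional ℝ V] {f₀ f₁ : V → V} {U : Set V} (hf₀ : Continuous f₀)
    (hf₁ : Continuous f₁) (hU : IsOpen U) (hUb : Bornology.IsBounded U)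
    (hne : ∀ x ∈ frontier U, 0 ∉ segment ℝ (f₀ x) (f₁ x)) :
    ∃ χ : V → ℝ, ContDiff ℝ 1 χ ∧ (∀ x ∉ U, χ x = 0) ∧ ∃ δ > 0, ∀ g₀ g₁ : V → V,
      (∀ x, dist (g₀ x) (f₀ x) < δ) → (∀ x, dist (g₁ x) (f₁ x) < δ) →
      ∀ φ : V → ℝ, (∀ y, δ ≤ ‖y‖ → φ y = 0) → ∀ τ ∈ Set.Icc (0 : ℝ) 1, ∀ x ∈ closure U,
        φ ((g₀ + τ • (g₁ - g₀)) x) ≠ 0 → χ =ᶠ[𝓝 x] 1 := by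
  let H : ℝ × V → V := fun p => f₀ p.2 + p.1 • (f₁ p.2 - f₀ p.2)
  have hH : Continuous H := by fun_prop
  let Z : Set V := Prod.snd '' ((Set.Icc (0 : ℝ) 1 ×ˢ closure U) ∩ H ⁻¹' {0})
  have hZ : IsClosed Z := (((isCompact_Icc.prod hUb.isCompact_closure).inter_right
    (isClosed_singleton.preimage hH)).image continuous_snd).isClosed
  have hZU : Z ⊆ U := by
    rintro _ ⟨⟨τ, x⟩, ⟨⟨hτ, hx⟩, h0⟩, rfl⟩
    by_contra hxU
    refine hne x (hU.frontier_eq ▸ ⟨hx, hxU⟩) ?_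
    rw [segment_eq_image']
    exact ⟨τ, hτ, h0⟩
  obtain ⟨χ, hχ, hχ0, U₁, hU₁, hZU₁, hχ1⟩ := exists_contDiff_cutoff hZ hU hZU
  obtain ⟨δ, hδ, hvanish⟩ := exists_pos_forall_comp_eq_zero hH
    (isCompact_Icc.prod (hUb.isCompact_closure.diff hU₁)) (by
      rintro ⟨τ, x⟩ ⟨hτ, hx, hxU₁⟩ h0
      exact hxU₁ (hZU₁ ⟨(τ, x), ⟨⟨hτ, hx⟩, h0⟩, rfl⟩))
  refine ⟨χ, hχ, hχ0, δ, hδ, fun g₀ g₁ h₀ h₁ φ hφ τ hτ x hx hφx => ?_⟩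
  have hclose : dist ((g₀ + τ • (g₁ - g₀)) x) (H (τ, x)) < δ := by
    have := convex_ball (0 : V) δ (x := g₀ x - f₀ x) (y := g₁ x - f₁ x)
      (by simpa [dist_eq_norm] using h₀ x) (by simpa [dist_eq_norm] using h₁ x)
      (sub_nonneg.2 hτ.2) hτ.1 (by ring)
    rw [mem_ball_zero_iff] at this
    calc dist ((g₀ + τ • (g₁ - g₀)) x) (H (τ, x))
        = ‖(1 - τ) • (g₀ x - f₀ x) + τ • (g₁ x - f₁ x)‖ := by
          rw [dist_eq_norm]
          congr 1
          change g₀ x + τ • (g₁ x - g₀ x) - (f₀ x + τ • (f₁ x - f₀ x)) = _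
          module
      _ < δ := this
  have hxU₁ : x ∈ U₁ := by
    by_contra hxU₁
    exact hφx (hvanish (τ, x) ⟨hτ, hx, hxU₁⟩ _ hclose φ hφ)
  filter_upwards [hU₁.mem_nhds hxU₁] with y hy using hχ1 y hy

variable {V : Type*} [NormedAddCommGroup V] [NormedSpace ℝ V] [MeasurableSpace V]

/-- The Brouwer degree of `f` on `U` at `0` vanishes. The degree itself is not constructed: the
condition says that the integrals `∫_U φ(g) det Dg` computing it vanish for all `C²`
approximations `g` of `f` and all weights `φ` concentrated near `0`. -/
def HasZeroDegree (μ : Measure V) (f : V → V) (U : Set V) : Prop :=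
  ∃ δ > 0, ∀ g : V → V, ContDiff ℝ 2 g → (∀ x, dist (g x) (f x) < δ) →
    ∀ φ : V → ℝ, ContDiff ℝ 1 φ → (∀ y, δ ≤ ‖y‖ → φ y = 0) →
      ∫ x in U, φ (g x) * (fderiv ℝ g x).det ∂μ = 0

variable [BorelSpace V] {μ : Measure V} {f f₀ f₁ : V → V} {U U' : Set V}

lemma setIntegral_eq_integral_weightedJacobian {χ φ : V → ℝ} {g : V → V} (hU : IsOpen U)
    (hχ0 : ∀ x ∉ U, χ x = 0) (hχ1 : ∀ x ∈ U, φ (g x) ≠ 0 → χ x = 1) :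
    ∫ x in U, φ (g x) * (fderiv ℝ g x).det ∂μ = ∫ x, weightedJacobian χ φ g x ∂μ := by
  rw [← integral_indicator hU.measurableSet]
  congr 1 with x
  by_cases hx : x ∈ U
  · by_cases h0 : φ (g x) = 0 <;> simp [hx, h0, weightedJacobian, hχ1]
  · simp [hx, weightedJacobian, hχ0]

variable [FiniteDimensional ℝ V]

lemma hasZeroDegree_iff_of_subset (hf : Continuous f) (hU : IsOpen U)
    (hUb : Bornology.IsBounded U) (hU' : IsOpen U') (hsub : U' ⊆ U)
    (hne : ∀ x ∈ closure U \ U', f x ≠ 0) :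
    HasZeroDegree μ f U' ↔ HasZeroDegree μ f U := by
  obtain ⟨η, hη, hvanish⟩ :=
    exists_pos_forall_comp_eq_zero hf (hUb.isCompact_closure.diff hU') hne
  have hintegral {g : V → V} (hgf : ∀ x, dist (g x) (f x) < η) {φ : V → ℝ}
      (hφ : ∀ y, η ≤ ‖y‖ → φ y = 0) :
      ∫ x in U, φ (g x) * (fderiv ℝ g x).det ∂μ = ∫ x in U', φ (g x) * (fderiv ℝ g x).det ∂μ :=
    setIntegral_eq_of_subset_of_forall_sdiff_eq_zero hU.measurableSet hsub fun x hx => by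
      rw [hvanish x ⟨subset_closure hx.1, hx.2⟩ _ (hgf x) φ hφ, zero_mul]
  constructor <;>
  · rintro ⟨δ, hδ, hzero⟩
    refine ⟨min δ η, lt_min hδ hη, fun g hg hgf φ hφ1 hφ => ?_⟩
    have hint := hintegral (fun x => (hgf x).trans_le (min_le_right _ _))
      fun y hy => hφ y ((min_le_right _ _).trans hy)
    have := hzero g hg (fun x => (hgf x).trans_le (min_le_left _ _)) φ hφ1
      fun y hy => hφ y ((min_le_left _ _).trans hy)
    simpa only [hint] using this

lemma hasZeroDegree_of_forall_ne (hf : Continuous f) (hU : IsOpen U)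
    (hUb : Bornology.IsBounded U) (hne : ∀ x ∈ closure U, f x ≠ 0) : HasZeroDegree μ f U :=
  (hasZeroDegree_iff_of_subset hf hU hUb isOpen_empty (Set.empty_subset U)
    fun x hx => hne x hx.1).1 ⟨1, one_pos, by simp⟩

lemma HasZeroDegree.homotopy [μ.IsAddHaarMeasure] (h : HasZeroDegree μ f₀ U)
    (hf₀ : Continuous f₀) (hf₁ : Continuous f₁) (hU : IsOpen U) (hUb : Bornology.IsBounded U)
    (hne : ∀ x ∈ frontier U, 0 ∉ segment ℝ (f₀ x) (f₁ x)) : HasZeroDegree μ f₁ U := by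
  obtain ⟨χ, hχ, hχ0, η, hη, hχ1⟩ := exists_cutoff_of_homotopy hf₀ hf₁ hU hUb hne
  obtain ⟨δ, hδ, hzero⟩ := h
  have hδη : 0 < min δ η := lt_min hδ hη
  obtain ⟨g₀, hg₀, hgf₀, -⟩ := hf₀.exists_contDiff_approx 2 (ε := fun _ => min δ η)
    continuous_const fun _ => hδη
  replace hg₀ : ContDiff ℝ 2 g₀ := hg₀
  refine ⟨min δ η, hδη, fun g₁ hg₁ hgf₁ φ hφ1 hφ => ?_⟩
  have hχ1' := hχ1 g₀ g₁ (fun x => (hgf₀ x).trans_le (min_le_right _ _))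
    (fun x => (hgf₁ x).trans_le (min_le_right _ _)) φ fun y hy => hφ y ((min_le_right _ _).trans hy)
  have hχc : HasCompactSupport χ :=
    HasCompactSupport.intro hUb.isCompact_closure fun x hx => hχ0 x fun h => hx (subset_closure h)
  have hcutoff (τ : ℝ) (hτ : τ ∈ Set.Icc (0 : ℝ) 1) (x : V)
      (hx : φ ((g₀ + τ • (g₁ - g₀)) x) ≠ 0) : fderiv ℝ χ x = 0 := by
    by_cases hxU : x ∈ closure U
    · rw [(hχ1' τ hτ x hxU hx).fderiv_eq, fderiv_one, Pi.zero_apply]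
    · have hχx : χ =ᶠ[𝓝 x] 0 := by
        filter_upwards [isClosed_closure.isOpen_compl.mem_nhds hxU] with y hy
        exact hχ0 y fun h => hy (subset_closure h)
      rw [hχx.fderiv_eq, fderiv_zero, Pi.zero_apply]
  calc ∫ x in U, φ (g₁ x) * (fderiv ℝ g₁ x).det ∂μ
      = ∫ x, weightedJacobian χ φ g₁ x ∂μ :=
        setIntegral_eq_integral_weightedJacobian hU hχ0 fun x hx h =>
          (hχ1' 1 (by simp) x (subset_closure hx) (by simpa using h)).self_of_nhds
    _ = ∫ x, weightedJacobian χ φ g₀ x ∂μ := by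
        have hdiff : ContDiff ℝ 2 (g₁ - g₀) := hg₁.sub hg₀
        simpa using integral_weightedJacobian_add_eq (μ := μ) hg₀ hdiff hχ hχc hφ1 hcutoff
    _ = ∫ x in U, φ (g₀ x) * (fderiv ℝ g₀ x).det ∂μ :=
        (setIntegral_eq_integral_weightedJacobian hU hχ0 fun x hx h =>
          (hχ1' 0 (by simp) x (subset_closure hx) (by simpa using h)).self_of_nhds).symm
    _ = 0 := hzero g₀ hg₀ (fun x => (hgf₀ x).trans_le (min_le_left _ _)) φ hφ1
        fun y hy => hφ y ((min_le_left _ _).trans hy)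

lemma not_hasZeroDegree_of_det_pos [μ.IsOpenPosMeasure] [IsFiniteMeasureOnCompacts μ]
    (hf : ContDiff ℝ 2 f) (hU : IsOpen U) (hUb : Bornology.IsBounded U) (c : ℝ)
    (hpos : ∀ x ∈ closure U, f x = 0 → 0 < c * (fderiv ℝ f x).det)
    {x₀ : V} (hx₀ : x₀ ∈ U) (hfx₀ : f x₀ = 0) : ¬HasZeroDegree μ f U := by
  rintro ⟨δ, hδ, hzero⟩
  have hdet : Continuous fun x => c * (fderiv ℝ f x).det :=
    continuous_const.mul (contDiff_clm_det (hf.fderiv_right (m := 1) (by norm_num))).continuous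
  obtain ⟨m, hm, hmf⟩ := (hUb.isCompact_closure.inter_right
    (isClosed_le hdet continuous_const)).exists_forall_le' (f := fun x => ‖f x‖) (a := 0)
    hf.continuous.norm.continuousOn fun x hx => norm_pos_iff.2 fun h => hx.2.not_gt (hpos x hx.1 h)
  have hr : 0 < min δ m := lt_min hδ hm
  let φ : ContDiffBump (0 : V) := ⟨min δ m / 2, min δ m, half_pos hr, half_lt_self hr⟩
  have hφ0 (y : V) (hy : min δ m ≤ ‖y‖) : φ y = 0 := φ.zero_of_le_dist (by rwa [dist_zero_right])
  let F : V → ℝ := fun x => φ (f x) * (c * (fderiv ℝ f x).det)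
  have hF : Continuous F := (φ.continuous.comp hf.continuous).mul hdet
  have hFint : IntegrableOn F U μ :=
    (hF.continuousOn.integrableOn_compact hUb.isCompact_closure).mono_set subset_closure
  have hFzero : ∫ x in U, F x ∂μ = 0 := by
    simp only [F, mul_left_comm _ c]
    rw [integral_const_mul, hzero f hf (by simpa using hδ) φ φ.contDiff
      fun y hy => hφ0 y ((min_le_left _ _).trans hy), mul_zero]
  have hFnonneg (x : V) (hx : x ∈ U) : 0 ≤ F x := by
    rcases le_or_gt (c * (fderiv ℝ f x).det) 0 with hd | hd
    · simp [F, hφ0 (f x) ((min_le_right _ _).trans (hmf x ⟨subset_closure hx, hd⟩))]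
    · exact mul_nonneg φ.nonneg hd.le
  have hFx₀ : F x₀ ≠ 0 := by
    have hφpos : 0 < φ (f x₀) := φ.pos_of_mem_ball (by simpa [hfx₀] using φ.rOut_pos)
    exact (mul_pos hφpos (hpos x₀ (subset_closure hx₀) hfx₀)).ne'
  have hFpos : 0 < ∫ x in U, F x ∂μ := (setIntegral_pos_iff_support_of_nonneg_ae
    (ae_restrict_of_forall_mem hU.measurableSet hFnonneg) hFint).2
    ((hF.isOpen_support.inter hU).measure_pos μ ⟨x₀, hFx₀, hx₀⟩)
  exact hFpos.ne' hFzero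

end ZeroDegree

section FiniteDimensionalBifurcation

open MeasureTheory Metric

lemma dist_eq_or_norm_eq_of_mem_frontier_box {W : Type*} [SeminormedAddCommGroup W]
    {t ε ρ : ℝ} {x : ℝ × W}
    (hx : x ∈ frontier (ball t ε ×ˢ ball (0 : W) ρ)) : dist x.1 t = ε ∨ ‖x.2‖ = ρ := by
  rw [frontier_prod_eq] at hx
  rcases hx with ⟨-, hx⟩ | ⟨hx, -⟩
  · exact Or.inr (mem_sphere_zero_iff_norm.1 (frontier_ball_subset_sphere hx))
  · exact Or.inl (frontier_ball_subset_sphere hx)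

/-- The function `s ↦ det (1 - s A)` has opposite signs on the two sides of `t`; this is how odd
algebraic multiplicity of the characteristic value `t` of `A` enters the degree argument. -/
def DetChangesSignAt {W : Type*} [AddCommGroup W] [Module ℝ W] (A : Module.End ℝ W) (t : ℝ) :
    Prop :=
  ∀ ε > 0, LinearMap.det (1 - (t + ε) • A) * LinearMap.det (1 - (t - ε) • A) < 0

lemma DetChangesSignAt.det_ne_zero {W : Type*} [AddCommGroup W] [Module ℝ W]
    {A : Module.End ℝ W} {t s : ℝ} (h : DetChangesSignAt A t) (hs : s ≠ t) :
    LinearMap.det (1 - s • A) ≠ 0 := by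
  intro hdet
  rcases hs.lt_or_gt with hlt | hlt
  · simpa [hdet] using h (t - s) (sub_pos.2 hlt)
  · simpa [hdet] using h (s - t) (sub_pos.2 hlt)

variable {W : Type*} [NormedAddCommGroup W] [NormedSpace ℝ W]

lemma DetChangesSignAt.eq_zero [FiniteDimensional ℝ W] {A : W →L[ℝ] W} {t s : ℝ}
    (h : DetChangesSignAt (A : Module.End ℝ W) t) (hs : s ≠ t) {w : W} (hw : w - s • A w = 0) :
    w = 0 := by
  have hunit := LinearMap.isUnit_iff_isUnit_det (1 - s • (A : Module.End ℝ W)) |>.2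
    (h.det_ne_zero hs).isUnit
  exact ((Module.End.isUnit_iff _).1 hunit).injective (by simpa using hw)

variable [FiniteDimensional ℝ W]

lemma det_fderiv_quadratic_model (A : W →L[ℝ] W) (a t s : ℝ) :
    (fderiv ℝ (fun x : ℝ × W => (a - (x.1 - t) ^ 2, x.2 - x.1 • A x.2)) (s, 0)).det =
      -2 * (s - t) * LinearMap.det (1 - s • (A : Module.End ℝ W)) := by
  have hfst : HasFDerivAt (fun x : ℝ × W => x.1) (.fst ℝ ℝ W) (s, 0) := hasFDerivAt_fst
  have hsnd : HasFDerivAt (fun x : ℝ × W => x.2) (.snd ℝ ℝ W) (s, 0) := hasFDerivAt_snd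
  have hquadratic : HasFDerivAt (fun x : ℝ × W => a - (x.1 - t) ^ 2)
      ((-2 * (s - t)) • .fst ℝ ℝ W) (s, 0) :=
    (((hfst.sub_const t).pow 2).const_sub a).congr_fderiv (by ext <;> simp)
  have hlinear : HasFDerivAt (fun x : ℝ × W => x.2 - x.1 • A x.2)
      ((1 - s • A) ∘L .snd ℝ ℝ W) (s, 0) :=
    (hsnd.sub (hfst.smul (A.hasFDerivAt.comp (s, 0) hsnd))).congr_fderiv (by ext <;> simp)
  rw [(hquadratic.prodMk hlinear).fderiv]
  have hprod : (((-2 * (s - t)) • ContinuousLinearMap.fst ℝ ℝ W).prod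
      ((1 - s • A) ∘L .snd ℝ ℝ W) : ℝ × W →ₗ[ℝ] ℝ × W) =
      LinearMap.prodMap ((-2 * (s - t)) • LinearMap.id) (1 - s • (A : Module.End ℝ W)) := by
    ext <;> simp
  rw [ContinuousLinearMap.det, hprod, LinearMap.det_prodMap]
  simp

variable [MeasurableSpace (ℝ × W)] [BorelSpace (ℝ × W)] {μ : Measure (ℝ × W)}
  [μ.IsAddHaarMeasure]

lemma hasZeroDegree_prodMk_sub_const {ψ : ℝ × W → ℝ} {Φ : ℝ × W → W} (hψ : Continuous ψ)
    (hΦ : Continuous Φ) {Ω : Set (ℝ × W)} (hΩ : IsOpen Ω) (hΩb : Bornology.IsBounded Ω) {r : ℝ}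
    (hne : ∀ x ∈ frontier Ω, r ≤ ψ x → Φ x ≠ 0) :
    HasZeroDegree μ (fun x => (ψ x - r, Φ x)) Ω := by
  obtain ⟨M, hM⟩ := (hΩb.isCompact_closure.image hψ).bddAbove
  have hψM (x : ℝ × W) (hx : x ∈ closure Ω) : ψ x - (max M r + 1) < 0 := by
    linarith [hM (Set.mem_image_of_mem ψ hx), le_max_left M r]
  have hlarge : HasZeroDegree μ (fun x => (ψ x - (max M r + 1), Φ x)) Ω :=
    hasZeroDegree_of_forall_ne (by fun_prop) hΩ hΩb fun x hx h0 =>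
      (hψM x hx).ne (congrArg Prod.fst h0)
  refine hlarge.homotopy (by fun_prop) (by fun_prop) hΩ hΩb fun x hx h0 => ?_
  obtain ⟨hfst, hsnd⟩ := Prod.segment_subset _ _ h0
  refine hne x hx ?_ (by simpa [eq_comm] using hsnd)
  by_contra hr
  have hneg : (0 : ℝ) ∈ Set.Iio 0 := (convex_Iio 0).segment_subset
    (hψM x (frontier_subset_closure hx)) (sub_neg.2 (not_le.1 hr)) hfst
  exact Set.self_notMem_Iio hneg

lemma not_hasZeroDegree_quadratic_model {A : W →L[ℝ] W} {t ε ρ : ℝ} (hε : 0 < ε) (hρ : 0 < ρ)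
    (hA : DetChangesSignAt (A : Module.End ℝ W) t) :
    ¬HasZeroDegree μ (fun x : ℝ × W => ((ε / 2) ^ 2 - (x.1 - t) ^ 2, x.2 - x.1 • A x.2))
      (ball t ε ×ˢ ball 0 ρ) := by
  have hzeros (x : ℝ × W)
      (hx : ((ε / 2) ^ 2 - (x.1 - t) ^ 2, x.2 - x.1 • A x.2) = (0 : ℝ × W)) :
      x = (t + ε / 2, 0) ∨ x = (t - ε / 2, 0) := by
    obtain ⟨hfst, hsnd⟩ := Prod.mk_eq_zero.1 hx
    have hroots : (x.1 - (t + ε / 2)) * (x.1 - (t - ε / 2)) = 0 := by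
      linear_combination -hfst
    have hxt : x.1 ≠ t := by
      rintro hxt
      rw [hxt] at hroots
      nlinarith
    rcases mul_eq_zero.1 hroots with h | h
    · exact Or.inl (Prod.ext (by linarith) (hA.eq_zero hxt hsnd))
    · exact Or.inr (Prod.ext (by linarith) (hA.eq_zero hxt hsnd))
  have hdet := hA.det_ne_zero (s := t + ε / 2) (by linarith)
  refine not_hasZeroDegree_of_det_pos (ContDiff.prodMk (by fun_prop) (by fun_prop))
    (isOpen_ball.prod isOpen_ball) (isBounded_ball.prod isBounded_ball)
    (-LinearMap.det (1 - (t + ε / 2) • (A : Module.End ℝ W))) ?_ (x₀ := (t + ε / 2, 0)) ?_ ?_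
  · intro x _ hx
    rcases hzeros x hx with rfl | rfl <;> rw [det_fderiv_quadratic_model]
    · nlinarith [sq_pos_of_ne_zero hdet]
    · nlinarith [hA (ε / 2) (half_pos hε)]
  · simpa [hρ, abs_of_pos hε] using hε
  · simp

lemma not_hasZeroDegree_linear_model {A : W →L[ℝ] W} {t ε ρ r : ℝ} (hε : 0 < ε) (hr : 0 < r)
    (hrρ : r < ρ) (hA : DetChangesSignAt (A : Module.End ℝ W) t) :
    ¬HasZeroDegree μ (fun x : ℝ × W => (‖x.2‖ - r, x.2 - x.1 • A x.2))
      (ball t ε ×ˢ ball 0 ρ) := by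
  intro h
  refine not_hasZeroDegree_quadratic_model (μ := μ) hε (hr.trans hrρ) hA <|
    h.homotopy (by fun_prop) (by fun_prop) (isOpen_ball.prod isOpen_ball)
      (isBounded_ball.prod isBounded_ball) fun x hx h0 => ?_
  obtain ⟨hfst, hsnd⟩ := Prod.segment_subset _ _ h0
  have hsol : x.2 - x.1 • A x.2 = 0 := by simpa [eq_comm] using hsnd
  by_cases hxt : x.1 = t
  · have hnorm : ‖x.2‖ = ρ :=
      (dist_eq_or_norm_eq_of_mem_frontier_box hx).resolve_left (by simpa [hxt] using hε.ne)
    have hpos : (0 : ℝ) ∈ Set.Ioi 0 := (convex_Ioi 0).segment_subset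
      (by simpa [hnorm] using hrρ) (by simpa [hxt] using pow_pos (half_pos hε) 2) hfst
    exact Set.self_notMem_Ioi hpos
  · have hx2 : x.2 = 0 := hA.eq_zero hxt hsol
    have hdist : |x.1 - t| = ε := (dist_eq_or_norm_eq_of_mem_frontier_box hx).resolve_right
      (by simpa [hx2] using (hr.trans hrρ).ne)
    have hneg : (0 : ℝ) ∈ Set.Iio 0 := (convex_Iio 0).segment_subset
      (by simpa [hx2] using hr) (by
        simp only [Set.mem_Iio, ← sq_abs (x.1 - t), hdist]
        nlinarith) hfst
    exact Set.self_notMem_Iio hneg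

end FiniteDimensionalBifurcation

open Metric in
lemma exists_zero_of_detChangesSignAt {W : Type*} [NormedAddCommGroup W] [NormedSpace ℝ W]
    [FiniteDimensional ℝ W] {A : W →L[ℝ] W} {R : ℝ × W → W} (hR : Continuous R)
    {Ω : Set (ℝ × W)} (hΩ : IsOpen Ω) (hΩb : Bornology.IsBounded Ω) {t ε ρ r : ℝ} (hε : 0 < ε)
    (hr : 0 < r) (hrρ : r < ρ) (hA : DetChangesSignAt (A : Module.End ℝ W) t)
    (hboxΩ : ball t ε ×ˢ ball 0 ρ ⊆ Ω)
    (hside : ∀ σ ∈ Set.Icc (0 : ℝ) 1, ∀ x : ℝ × W, dist x.1 t = ε → ‖x.2‖ = r →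
      x.2 - x.1 • A x.2 - σ • R x ≠ 0) :
    ∃ x : ℝ × W, x.2 - x.1 • A x.2 - R x = 0 ∧
      (x ∈ frontier Ω ∧ r ≤ ‖x.2‖ ∨ x ∈ closure Ω \ ball t ε ×ˢ ball 0 ρ ∧ ‖x.2‖ = r) := by
  by_contra! hcon
  borelize (ℝ × W)
  let μ : MeasureTheory.Measure (ℝ × W) := MeasureTheory.Measure.addHaar
  have hbox : IsOpen (ball t ε ×ˢ ball (0 : W) ρ) := isOpen_ball.prod isOpen_ball
  have hzeroΩ : HasZeroDegree μ (fun x => (‖x.2‖ - r, x.2 - x.1 • A x.2 - R x)) Ω :=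
    hasZeroDegree_prodMk_sub_const (by fun_prop) (by fun_prop) hΩ hΩb
      fun x hx hrx hsol => ((hcon x hsol).1 hx).not_ge hrx
  have hzerobox := (hasZeroDegree_iff_of_subset (by fun_prop) hΩ hΩb hbox hboxΩ
    fun x hx h0 => (hcon x (congrArg Prod.snd h0)).2 hx (sub_eq_zero.1 (congrArg Prod.fst h0))).2
    hzeroΩ
  refine not_hasZeroDegree_linear_model (μ := μ) hε hr hrρ hA <|
    hzerobox.homotopy (by fun_prop) (by fun_prop) hbox (hΩb.subset hboxΩ) fun x hx h0 => ?_
  obtain ⟨hfst, p, q, hp, hq, hpq, hsnd⟩ := Prod.segment_subset _ _ h0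
  have hnorm : ‖x.2‖ = r := by simpa [eq_comm, sub_eq_zero] using hfst
  have hdist := (dist_eq_or_norm_eq_of_mem_frontier_box hx).resolve_right (hnorm.trans_ne hrρ.ne)
  refine hside p ⟨hp, by linarith⟩ x hdist hnorm ?_
  calc x.2 - x.1 • A x.2 - p • R x
      = p • (x.2 - x.1 • A x.2 - R x) + q • (x.2 - x.1 • A x.2) := by
        rw [← eq_sub_iff_add_eq'] at hpq
        rw [hpq]
        module
    _ = 0 := hsnd

section CompactMaps

open Metric

/-- A completely continuous, possibly nonlinear map. Relative compactness of the image of a bounded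
set is expressed by a compact set containing it, which is what survives composition. -/
structure IsCompactMap {X Y : Type*} [TopologicalSpace X] [Bornology X] [TopologicalSpace Y]
    (f : X → Y) : Prop where
  continuous : Continuous f
  exists_mapsTo : ∀ s : Set X, Bornology.IsBounded s → ∃ K, IsCompact K ∧ Set.MapsTo f s K

lemma isCompactMap_of_isCompact_closure_image {X Y : Type*} [TopologicalSpace X] [Bornology X]
    [TopologicalSpace Y] {f : X → Y} (hf : Continuous f)
    (hcompact : ∀ s : Set X, Bornology.IsBounded s → IsCompact (closure (f '' s))) :
    IsCompactMap f where
  continuous := hf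
  exists_mapsTo s hs := ⟨_, hcompact s hs, fun _ hx => subset_closure (Set.mem_image_of_mem f hx)⟩

lemma isCompactMap_of_lipschitzWith {X Y : Type*} [PseudoMetricSpace X] [PseudoMetricSpace Y]
    [ProperSpace Y] {f : X → Y} {L : NNReal} (hf : LipschitzWith L f) : IsCompactMap f :=
  isCompactMap_of_isCompact_closure_image hf.continuous
    fun _ hs => (hf.isBounded_image hs).isCompact_closure

section Constructions

variable {X Y Z : Type*} [TopologicalSpace X] [Bornology X] [TopologicalSpace Y]
  [TopologicalSpace Z]

lemma IsCompactMap.continuous_comp {f : X → Y} (hf : IsCompactMap f) {g : Y → Z}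
    (hg : Continuous g) : IsCompactMap fun x => g (f x) where
  continuous := hg.comp hf.continuous
  exists_mapsTo s hs := by
    obtain ⟨K, hK, hsK⟩ := hf.exists_mapsTo s hs
    exact ⟨g '' K, hK.image hg, fun x hx => Set.mem_image_of_mem g (hsK hx)⟩

lemma IsCompactMap.prodMk {f : X → Y} (hf : IsCompactMap f) {g : X → Z} (hg : IsCompactMap g) :
    IsCompactMap fun x => (f x, g x) where
  continuous := hf.continuous.prodMk hg.continuous
  exists_mapsTo s hs := by
    obtain ⟨K, hK, hsK⟩ := hf.exists_mapsTo s hs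
    obtain ⟨K', hK', hsK'⟩ := hg.exists_mapsTo s hs
    exact ⟨K ×ˢ K', hK.prod hK', fun x hx => ⟨hsK hx, hsK' hx⟩⟩

lemma IsCompactMap.add [Add Y] [ContinuousAdd Y] {f g : X → Y} (hf : IsCompactMap f)
    (hg : IsCompactMap g) : IsCompactMap fun x => f x + g x :=
  (hf.prodMk hg).continuous_comp continuous_add

lemma IsCompactMap.smul [SMul Y Z] [ContinuousSMul Y Z] {f : X → Y} (hf : IsCompactMap f)
    {g : X → Z} (hg : IsCompactMap g) : IsCompactMap fun x => f x • g x :=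
  (hf.prodMk hg).continuous_comp continuous_smul

end Constructions

lemma IsCompactMap.comp_lipschitzWith {X Y Z : Type*} [PseudoMetricSpace X] [PseudoMetricSpace Y]
    [TopologicalSpace Z] {f : Y → Z} (hf : IsCompactMap f) {g : X → Y} {L : NNReal}
    (hg : LipschitzWith L g) : IsCompactMap fun x => f (g x) where
  continuous := hf.continuous.comp hg.continuous
  exists_mapsTo s hs := by
    obtain ⟨K, hK, hsK⟩ := hf.exists_mapsTo _ (hg.isBounded_image hs)
    exact ⟨K, hK, fun x hx => hsK (Set.mem_image_of_mem g hx)⟩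

lemma IsCompactMap.comp_snd {X Y Z : Type*} [PseudoMetricSpace X] [PseudoMetricSpace Y]
    [TopologicalSpace Z] {f : Y → Z} (hf : IsCompactMap f) :
    IsCompactMap fun x : X × Y => f x.2 :=
  hf.comp_lipschitzWith LipschitzWith.prod_snd

lemma isCompactMap_fst {X Y : Type*} [PseudoMetricSpace X] [ProperSpace X] [PseudoMetricSpace Y] :
    IsCompactMap (Prod.fst : X × Y → X) :=
  isCompactMap_of_lipschitzWith LipschitzWith.prod_fst

section FixedPoints

variable {Y E : Type*} [MetricSpace Y] [ProperSpace Y] [NormedAddCommGroup E]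
  {K : Y × E → E}

lemma IsCompactMap.isCompact_of_forall_snd_eq (hK : IsCompactMap K) {B : Set (Y × E)}
    (hB : IsClosed B) (hBb : Bornology.IsBounded B) (hfix : ∀ x ∈ B, x.2 = K x) :
    IsCompact B := by
  obtain ⟨k, hk, hBk⟩ := hK.exists_mapsTo B hBb
  refine (hBb.image_fst.isCompact_closure.prod hk).of_isClosed_subset hB fun x hx => ⟨?_, ?_⟩
  · exact subset_closure (Set.mem_image_of_mem Prod.fst hx)
  · exact hfix x hx ▸ hBk hx

lemma IsCompactMap.exists_pos_forall_le_norm_sub (hK : IsCompactMap K) {B : Set (Y × E)}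
    (hB : IsClosed B) (hBb : Bornology.IsBounded B) (hne : ∀ x ∈ B, x.2 - K x ≠ 0) :
    ∃ δ > 0, ∀ x ∈ B, δ ≤ ‖x.2 - K x‖ := by
  by_contra! hcon
  obtain ⟨k, hk, hBk⟩ := hK.exists_mapsTo B hBb
  choose x hxB hx using fun n : ℕ => hcon (1 / (n + 1)) Nat.one_div_pos_of_nat
  have hfstCompact : IsCompact (closure (Prod.fst '' B)) := hBb.image_fst.isCompact_closure
  obtain ⟨⟨y, e⟩, -, φ, hφ, hlim⟩ := (hfstCompact.prod hk).tendsto_subseq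
    (x := fun n => ((x n).1, K (x n)))
    fun n => ⟨subset_closure ⟨x n, hxB n, rfl⟩, hBk (hxB n)⟩
  obtain ⟨hlimFst, hlimK⟩ := Prod.tendsto_iff _ _ |>.1 hlim
  have hlimSub : Tendsto (fun n => (x n).2 - K (x n)) atTop (𝓝 0) :=
    squeeze_zero_norm (fun n => (hx n).le) tendsto_one_div_add_atTop_nhds_zero_nat
  have hlimSnd : Tendsto (fun n => (x (φ n)).2) atTop (𝓝 e) := by
    simpa using (hlimSub.comp hφ.tendsto_atTop).add hlimK
  have hlimit : Tendsto (fun n => x (φ n)) atTop (𝓝 (y, e)) := hlimFst.prodMk_nhds hlimSnd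
  have hmem : (y, e) ∈ B := hB.mem_of_tendsto hlimit (.of_forall fun n => hxB _)
  have hfix : K (y, e) = e :=
    tendsto_nhds_unique ((hK.continuous.tendsto _).comp hlimit) hlimK
  exact hne _ hmem (sub_eq_zero.2 hfix.symm)

lemma IsCompactMap.exists_pos_forall_le_norm_sub_sub_smul [NormedSpace ℝ E] (hK : IsCompactMap K)
    {R : Y × E → E} (hR : IsCompactMap R) {B : Set (Y × E)} (hB : IsClosed B)
    (hBb : Bornology.IsBounded B)
    (hne : ∀ σ ∈ Set.Icc (0 : ℝ) 1, ∀ x ∈ B, x.2 - K x - σ • R x ≠ 0) :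
    ∃ δ > 0, ∀ σ ∈ Set.Icc (0 : ℝ) 1, ∀ x ∈ B, δ ≤ ‖x.2 - K x - σ • R x‖ := by
  let q : (ℝ × Y) × E → Y × E := fun p => (p.1.2, p.2)
  have hq : LipschitzWith (max (1 * 1) 1) q :=
    (LipschitzWith.prod_snd.comp .prod_fst).prodMk .prod_snd
  have hhomotopy : IsCompactMap fun p => K (q p) + p.1.1 • R (q p) :=
    (hK.comp_lipschitzWith hq).add
      ((isCompactMap_fst.continuous_comp continuous_fst).smul (hR.comp_lipschitzWith hq))
  have hbounded : Bornology.IsBounded {p : (ℝ × Y) × E | p.1.1 ∈ Set.Icc (0 : ℝ) 1 ∧ q p ∈ B} :=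
    (((isBounded_Icc (0 : ℝ) 1).prod hBb.image_fst).prod hBb.image_snd).subset
      fun p hp => ⟨⟨hp.1, q p, hp.2, rfl⟩, q p, hp.2, rfl⟩
  obtain ⟨δ, hδ, hle⟩ := hhomotopy.exists_pos_forall_le_norm_sub
    ((isClosed_Icc.preimage (continuous_fst.comp continuous_fst)).inter
      (hB.preimage hq.continuous)) hbounded
    fun p hp => sub_sub p.2 _ _ ▸ hne p.1.1 hp.1 (q p) hp.2
  exact ⟨δ, hδ, fun σ hσ x hx => sub_sub x.2 _ _ ▸ hle ((σ, x.1), x.2) ⟨hσ, hx⟩⟩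

lemma IsCompactMap.exists_pos_forall_mul_norm_le [NormedSpace ℝ E] (hK : IsCompactMap K)
    (hsmul : ∀ (y : Y) (c : ℝ) (u : E), K (y, c • u) = c • K (y, u)) {A : Set Y}
    (hA : IsCompact A) (hne : ∀ y ∈ A, ∀ u, u - K (y, u) = 0 → u = 0) :
    ∃ c > 0, ∀ y ∈ A, ∀ u, c * ‖u‖ ≤ ‖u - K (y, u)‖ := by
  obtain ⟨c, hc, hle⟩ := hK.exists_pos_forall_le_norm_sub (hA.isClosed.prod isClosed_sphere)
    (hA.isBounded.prod (isBounded_sphere (x := 0) (r := 1))) fun x hx h =>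
      ne_zero_of_mem_unit_sphere ⟨x.2, hx.2⟩ (hne x.1 hx.1 x.2 h)
  refine ⟨c, hc, fun y hy u => ?_⟩
  rcases eq_or_ne u 0 with rfl | hu
  · simp
  have hunit := hle (y, ‖u‖⁻¹ • u) ⟨hy, by simp [norm_smul, hu]⟩
  rwa [hsmul, ← smul_sub, norm_smul, norm_inv, norm_norm, inv_mul_eq_div,
    le_div_iff₀ (norm_pos_iff.2 hu)] at hunit

end FixedPoints

lemma exists_finiteDimensional_approximation {E : Type*} [NormedAddCommGroup E] [NormedSpace ℝ E]
    {k : Set E} (hk : IsCompact k) {δ : ℝ} (hδ : 0 < δ) (V : Submodule ℝ E)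
    [FiniteDimensional ℝ V] :
    ∃ W : Submodule ℝ E, V ≤ W ∧ FiniteDimensional ℝ W ∧
      ∃ p : C(E, W), ∀ y ∈ k, dist (p y : E) y < δ := by
  obtain ⟨s, -, hsf, hs⟩ := hk.finite_cover_balls hδ
  have := FiniteDimensional.span_of_finite ℝ hsf
  refine ⟨V ⊔ Submodule.span ℝ s, le_sup_left, inferInstance, ?_⟩
  refine exists_continuous_forall_mem_convex_of_local_const
    (t := fun y => {w : ↥(V ⊔ Submodule.span ℝ s) | y ∈ k → dist (w : E) y < δ})
    (fun y => ?_) fun y => ?_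
  · rw [Set.ofPred_forall]
    exact convex_iInter fun _ =>
      (convex_ball y δ).linear_preimage (V ⊔ Submodule.span ℝ s).subtype
  · by_cases hy : y ∈ k
    · obtain ⟨c, hc, hyc⟩ := Set.mem_iUnion₂.1 (hs hy)
      refine ⟨⟨c, Submodule.mem_sup_right (Submodule.subset_span hc)⟩, ?_⟩
      filter_upwards [isOpen_ball.mem_nhds hyc] with z hz _
      exact dist_comm z c ▸ hz
    · refine ⟨0, ?_⟩
      filter_upwards [hk.isClosed.isOpen_compl.mem_nhds hy] with z hz hzk
      exact absurd hzk hz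

end CompactMaps

section DeterminantSign

lemma det_one_sub_comp_comm {𝕜 N W : Type*} [Field 𝕜] [AddCommGroup N] [Module 𝕜 N]
    [AddCommGroup W] [Module 𝕜 W] [FiniteDimensional 𝕜 N] [FiniteDimensional 𝕜 W]
    (B : N →ₗ[𝕜] W) (C : W →ₗ[𝕜] N) :
    LinearMap.det (1 - B ∘ₗ C) = LinearMap.det (1 - C ∘ₗ B) := by
  let bN := Module.finBasis 𝕜 N
  let bW := Module.finBasis 𝕜 W
  rw [← LinearMap.det_toMatrix bN, ← LinearMap.det_toMatrix bW, map_sub, map_sub,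
    LinearMap.toMatrix_one, LinearMap.toMatrix_one, LinearMap.toMatrix_comp bW bN bW,
    LinearMap.toMatrix_comp bN bW bN, Matrix.det_one_sub_mul_comm]

lemma DetChangesSignAt.comp_comm {N W : Type*} [AddCommGroup N] [Module ℝ N] [AddCommGroup W]
    [Module ℝ W] [FiniteDimensional ℝ N] [FiniteDimensional ℝ W] {B : N →ₗ[ℝ] W}
    {C : W →ₗ[ℝ] N} {t : ℝ} (h : DetChangesSignAt (C ∘ₗ B) t) : DetChangesSignAt (B ∘ₗ C) t := by
  intro ε hε
  have hcomm (s : ℝ) : LinearMap.det (1 - s • (B ∘ₗ C)) = LinearMap.det (1 - s • (C ∘ₗ B)) := by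
    rw [← LinearMap.smul_comp, det_one_sub_comp_comm, LinearMap.comp_smul]
  simpa only [hcomm] using h ε hε

lemma det_one_sub_smul_eq_pow_finrank {𝕜 N : Type*} [Field 𝕜] [AddCommGroup N] [Module 𝕜 N]
    [FiniteDimensional 𝕜 N] {f : Module.End 𝕜 N} {κ : 𝕜}
    (hf : IsNilpotent (f - algebraMap 𝕜 (Module.End 𝕜 N) κ)) (s : 𝕜) :
    LinearMap.det (1 - s • f) = (1 - s * κ) ^ Module.finrank 𝕜 N := by
  rcases eq_or_ne s 0 with rfl | hs
  · simp
  have hfactor : 1 - s • f = s • (algebraMap 𝕜 (Module.End 𝕜 N) ((1 - s * κ) / s) -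
      (f - algebraMap 𝕜 (Module.End 𝕜 N) κ)) := by
    ext x
    simp only [LinearMap.sub_apply, LinearMap.smul_apply, Module.End.one_apply,
      Module.algebraMap_end_apply, smul_sub, smul_smul, mul_div_cancel₀ _ hs]
    module
  rw [hfactor, LinearMap.det_smul, ← LinearMap.eval_charpoly, hf.charpoly_eq_X_pow_finrank,
    Polynomial.eval_X_pow, ← mul_pow, mul_div_cancel₀ _ hs]

lemma detChangesSignAt_of_isNilpotent {N : Type*} [AddCommGroup N] [Module ℝ N]
    [FiniteDimensional ℝ N] {f : Module.End ℝ N} {t : ℝ} (ht : t ≠ 0)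
    (hf : IsNilpotent (f - algebraMap ℝ (Module.End ℝ N) (1 / t)))
    (hodd : Odd (Module.finrank ℝ N)) : DetChangesSignAt f t := by
  intro ε hε
  rw [det_one_sub_smul_eq_pow_finrank hf, det_one_sub_smul_eq_pow_finrank hf, ← mul_pow]
  have hbase : (1 - (t + ε) * (1 / t)) * (1 - (t - ε) * (1 / t)) = -(ε / t) ^ 2 := by
    field_simp
    ring
  exact hodd.pow_neg (hbase ▸ neg_neg_of_pos (by positivity))

lemma isNilpotent_restrict_maxGenEigenspace_sub_algebraMap {R M : Type*} [CommRing R]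
    [AddCommGroup M] [Module R M] (f : Module.End R M) (κ : R)
    [Module.Finite R (f.maxGenEigenspace κ)]
    (hf : Set.MapsTo f (f.maxGenEigenspace κ) (f.maxGenEigenspace κ)) :
    IsNilpotent (f.restrict hf - algebraMap R (Module.End R (f.maxGenEigenspace κ)) κ) := by
  have hmaps : ∀ x ∈ f.maxGenEigenspace κ, (f - κ • 1) x ∈ f.maxGenEigenspace κ :=
    fun x hx => Submodule.sub_mem _ (hf hx) (Submodule.smul_mem _ κ hx)
  have hrestrict : f.restrict hf - algebraMap R (Module.End R (f.maxGenEigenspace κ)) κ =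
      (f - κ • 1).restrict hmaps := rfl
  rw [Module.End.isNilpotent_iff_of_finite, hrestrict]
  rintro ⟨x, hx⟩
  obtain ⟨n, hn⟩ := (f.mem_maxGenEigenspace κ x).1 hx
  exact ⟨n, Subtype.ext (Module.End.pow_restrict n hmaps ▸ hn)⟩

end DeterminantSign

section InfiniteDimensionalBifurcation

open Metric

variable {N E : Type*} [NormedAddCommGroup N] [NormedSpace ℝ N] [FiniteDimensional ℝ N]
  [NormedAddCommGroup E] [NormedSpace ℝ E] {B : N →L[ℝ] E} {C : E →L[ℝ] N} {R : ℝ × E → E}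
  {Ω : Set (ℝ × E)} {t ε ρ r : ℝ}

lemma exists_approximate_zero_of_detChangesSignAt (hR : IsCompactMap R) (hΩ : IsOpen Ω)
    (hΩb : Bornology.IsBounded Ω) (hε : 0 < ε) (hr : 0 < r) (hrρ : r < ρ)
    (hdet : DetChangesSignAt ((C ∘L B : N →L[ℝ] N) : Module.End ℝ N) t)
    (hboxΩ : ball t ε ×ˢ ball 0 ρ ⊆ Ω) {δ : ℝ} (hδ : 0 < δ)
    (hside : ∀ σ ∈ Set.Icc (0 : ℝ) 1, ∀ x : ℝ × E, dist x.1 t = ε → ‖x.2‖ = r →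
      δ ≤ ‖x.2 - x.1 • B (C x.2) - σ • R x‖) :
    ∃ x : ℝ × E, ‖x.2 - x.1 • B (C x.2) - R x‖ < δ ∧
      (x ∈ frontier Ω ∧ r ≤ ‖x.2‖ ∨ x ∈ closure Ω \ ball t ε ×ˢ ball 0 ρ ∧ ‖x.2‖ = r) := by
  obtain ⟨k, hk, hRk⟩ := hR.exists_mapsTo _ hΩb.closure
  obtain ⟨W, hBW, _, p, hp⟩ := exists_finiteDimensional_approximation hk hδ B.range
  let BW : N →L[ℝ] W := B.codRestrict W fun v => hBW ⟨v, rfl⟩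
  let j : ℝ × W → ℝ × E := Prod.map id (↑)
  have hjIsometry : Isometry j := isometry_id.prodMap isometry_subtype_coe
  have hj : Continuous j := hjIsometry.continuous
  have hsideΩ (x : ℝ × E) (hx : dist x.1 t = ε) (hxr : ‖x.2‖ = r) : x ∈ closure Ω := by
    refine closure_mono hboxΩ ?_
    rw [closure_prod_eq, closure_ball t hε.ne']
    exact ⟨hx.le, subset_closure (by simpa [hxr])⟩
  have happrox (σ : ℝ) (hσ : σ ∈ Set.Icc (0 : ℝ) 1) (x : ℝ × W) (hx : j x ∈ closure Ω)
      (hzero : x.2 - x.1 • (BW ∘L C ∘L W.subtypeL) x.2 - σ • p (R (j x)) = 0) :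
      ‖(j x).2 - (j x).1 • B (C (j x).2) - σ • R (j x)‖ < δ := by
    have hcoe : (j x).2 - (j x).1 • B (C (j x).2) = σ • (p (R (j x)) : E) :=
      sub_eq_zero.1 (congrArg Subtype.val hzero)
    rw [hcoe, ← smul_sub, norm_smul, Real.norm_of_nonneg hσ.1, ← dist_eq_norm]
    exact (mul_le_of_le_one_left dist_nonneg hσ.2).trans_lt (hp _ (hRk hx))
  obtain ⟨x, hx, hxΩ⟩ := exists_zero_of_detChangesSignAt (A := BW ∘L C ∘L W.subtypeL)
    (R := fun x => p (R (j x))) (p.continuous.comp (hR.continuous.comp hj))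
    (hΩ.preimage hj) (hjIsometry.antilipschitz.isBounded_preimage hΩb) hε hr hrρ
    (DetChangesSignAt.comp_comm (B := (BW : N →ₗ[ℝ] W)) (C := C ∘L W.subtypeL) hdet)
    (fun x hx => hboxΩ hx)
    fun σ hσ x hxt hxr hzero => (hside σ hσ (j x) hxt hxr).not_gt
      (happrox σ hσ x (hsideΩ _ hxt hxr) hzero)
  · have hxclosure : j x ∈ closure Ω := by
      rcases hxΩ with hxΩ | hxΩ
      · exact frontier_subset_closure (hj.frontier_preimage_subset Ω hxΩ.1)
      · exact hj.closure_preimage_subset Ω hxΩ.1.1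
    refine ⟨j x, by simpa using happrox 1 ⟨zero_le_one, le_rfl⟩ x hxclosure (by simpa using hx), ?_⟩
    exact hxΩ.imp (And.imp_left fun h => hj.frontier_preimage_subset Ω h)
      (And.imp_left fun h => ⟨hj.closure_preimage_subset Ω h.1, h.2⟩)

lemma exists_zero_of_detChangesSignAt_comp (hR : IsCompactMap R) (hΩ : IsOpen Ω)
    (hΩb : Bornology.IsBounded Ω) (hε : 0 < ε) (hr : 0 < r) (hrρ : r < ρ)
    (hdet : DetChangesSignAt ((C ∘L B : N →L[ℝ] N) : Module.End ℝ N) t)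
    (hboxΩ : ball t ε ×ˢ ball 0 ρ ⊆ Ω)
    (hside : ∀ σ ∈ Set.Icc (0 : ℝ) 1, ∀ x : ℝ × E, dist x.1 t = ε → ‖x.2‖ = r →
      x.2 - x.1 • B (C x.2) - σ • R x ≠ 0) :
    ∃ x : ℝ × E, x.2 - x.1 • B (C x.2) - R x = 0 ∧
      (x ∈ frontier Ω ∧ r ≤ ‖x.2‖ ∨ x ∈ closure Ω \ ball t ε ×ˢ ball 0 ρ ∧ ‖x.2‖ = r) := by
  have hBC : IsCompactMap fun u => B (C u) :=
    (isCompactMap_of_lipschitzWith C.lipschitz).continuous_comp B.continuous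
  have hK : IsCompactMap fun x : ℝ × E => x.1 • B (C x.2) := isCompactMap_fst.smul hBC.comp_snd
  obtain ⟨δ, hδ, hle⟩ := hK.exists_pos_forall_le_norm_sub_sub_smul hR
    (isClosed_sphere.prod isClosed_sphere)
    ((isBounded_sphere (x := t) (r := ε)).prod (isBounded_sphere (x := 0) (r := r)))
    fun σ hσ x hx => hside σ hσ x hx.1 (mem_sphere_zero_iff_norm.1 hx.2)
  by_contra hne
  have hclosed : IsClosed (frontier Ω ∩ {x : ℝ × E | r ≤ ‖x.2‖} ∪
      closure Ω \ ball t ε ×ˢ ball 0 ρ ∩ {x : ℝ × E | ‖x.2‖ = r}) :=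
    (isClosed_frontier.inter (isClosed_le (by fun_prop) (by fun_prop))).union
      ((isClosed_closure.sdiff (isOpen_ball.prod isOpen_ball)).inter
        (isClosed_eq (by fun_prop) (by fun_prop)))
  obtain ⟨δ', hδ', hle'⟩ := (hK.add hR).exists_pos_forall_le_norm_sub hclosed
    (hΩb.closure.subset fun x hx => hx.elim (fun h => frontier_subset_closure h.1) fun h => h.1.1)
    fun x hx hzero => hne ⟨x, (sub_sub x.2 _ _).trans hzero, hx⟩
  obtain ⟨x, hx, hxΩ⟩ := exists_approximate_zero_of_detChangesSignAt hR hΩ hΩb hε hr hrρ hdet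
    hboxΩ (lt_min hδ hδ') fun σ hσ x hxt hxr => (min_le_left _ _).trans
      (hle σ hσ x ⟨hxt, mem_sphere_zero_iff_norm.2 hxr⟩)
  exact (hle' x hxΩ).not_gt (sub_sub x.2 _ _ ▸ hx.trans_le (min_le_right _ _))

end InfiniteDimensionalBifurcation

section Separation

lemma exists_isClopen_subset_of_connectedComponent_subset {X : Type*} [TopologicalSpace X]
    [CompactSpace X] [T2Space X] {x : X} {O : Set X} (hO : IsOpen O)
    (hsub : connectedComponent x ⊆ O) : ∃ A : Set X, IsClopen A ∧ x ∈ A ∧ A ⊆ O := by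
  rw [connectedComponent_eq_iInter_isClopen] at hsub
  have : Nonempty {s : Set X // IsClopen s ∧ x ∈ s} := ⟨⟨Set.univ, isClopen_univ, trivial⟩⟩
  obtain ⟨A, hA⟩ := exists_subset_nhds_of_compactSpace
    (V := fun s : {s : Set X // IsClopen s ∧ x ∈ s} => (s : Set X))
    (fun a b => ⟨⟨a.1 ∩ b.1, a.2.1.inter b.2.1, a.2.2, b.2.2⟩, Set.inter_subset_left,
      Set.inter_subset_right⟩)
    (fun s => s.2.1.isClosed) fun y hy => hO.mem_nhds (hsub hy)
  exact ⟨A, A.2.1, A.2.2, hA⟩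

lemma exists_isClopen_isCompact_subset_of_isBounded_connectedComponent {X : Type*} [MetricSpace X]
    [ProperSpace X] {x : X} (hb : Bornology.IsBounded (connectedComponent x)) {O : Set X}
    (hO : IsOpen O) (hsub : connectedComponent x ⊆ O) :
    ∃ A : Set X, IsClopen A ∧ IsCompact A ∧ x ∈ A ∧ A ⊆ O := by
  let V := O ∩ Metric.thickening 1 (connectedComponent x)
  have hV : IsOpen V := hO.inter Metric.isOpen_thickening
  have hCV : connectedComponent x ⊆ V :=
    Set.subset_inter hsub (Metric.self_subset_thickening one_pos _)
  have hM : IsCompact (closure V) := (hb.thickening.subset Set.inter_subset_right).isCompact_closure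
  have : CompactSpace (closure V) := isCompact_iff_compactSpace.1 hM
  let x' : closure V := ⟨x, subset_closure (hCV mem_connectedComponent)⟩
  obtain ⟨A, hA, hxA, hAV⟩ := exists_isClopen_subset_of_connectedComponent_subset (x := x')
    (hV.preimage continuous_subtype_val) fun y hy =>
      hCV (continuous_subtype_val.image_connectedComponent_subset x' ⟨y, hy, rfl⟩)
  have hAcompact : IsCompact ((↑) '' A : Set X) :=
    hA.isClosed.isCompact.image continuous_subtype_val
  obtain ⟨U, hU, rfl⟩ := isOpen_induced_iff.1 hA.isOpen
  have himage : ((↑) '' ((↑) ⁻¹' U : Set (closure V)) : Set X) = U ∩ V := by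
    ext y
    constructor
    · rintro ⟨y, hy, rfl⟩
      exact ⟨hy, hAV hy⟩
    · exact fun hy => ⟨⟨y, subset_closure hy.2⟩, hy.1, rfl⟩
  rw [himage] at hAcompact
  exact ⟨U ∩ V, ⟨hAcompact.isClosed, hU.inter hV⟩, hAcompact, ⟨hxA, hCV mem_connectedComponent⟩,
    fun y hy => hy.2.1⟩

lemma exists_isOpen_isolating_of_isBounded_connectedComponentIn {X : Type*} [MetricSpace X]
    {Z : Set X} [ProperSpace Z] {x : X} (hx : x ∈ Z)
    (hb : Bornology.IsBounded (connectedComponentIn Z x)) {O : Set X} (hO : IsOpen O)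
    (hsub : connectedComponentIn Z x ⊆ O) :
    ∃ Ω : Set X, IsOpen Ω ∧ Bornology.IsBounded Ω ∧ x ∈ Ω ∧ closure Ω ⊆ O ∧
      Disjoint (frontier Ω) Z := by
  rw [connectedComponentIn_eq_image hx] at hb hsub
  have hZ : IsClosed Z := (completeSpace_coe_iff_isComplete.1 inferInstance).isClosed
  obtain ⟨A, hA, hAcompact, hxA, hAO⟩ :=
    exists_isClopen_isCompact_subset_of_isBounded_connectedComponent
      (Bornology.isBounded_image_subtype_val.1 hb)
      (hO.preimage continuous_subtype_val) (Set.image_subset_iff.1 hsub)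
  have hA₁ : IsCompact (Subtype.val '' A) := hAcompact.image continuous_subtype_val
  have hA₂ : IsClosed (Subtype.val '' Aᶜ) :=
    hZ.isClosedEmbedding_subtypeVal.isClosedMap _ hA.compl.isClosed
  obtain ⟨η, hη, hcthick⟩ := hA₁.exists_cthickening_subset_open (hO.inter hA₂.isOpen_compl)
    (Set.subset_inter (Set.image_subset_iff.2 hAO) <| Set.disjoint_left.1 <|
      (Set.disjoint_image_iff Subtype.val_injective).2 disjoint_compl_right)
  have hclosure := (Metric.closure_thickening_subset_cthickening _ _).trans hcthick
  refine ⟨Metric.thickening η (Subtype.val '' A), Metric.isOpen_thickening,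
    hA₁.isBounded.thickening, Metric.self_subset_thickening hη _ ⟨_, hxA, rfl⟩,
    fun y hy => (hclosure hy).1,
    Set.disjoint_left.2 fun y hy hyZ => ?_⟩
  rw [Metric.isOpen_thickening.frontier_eq] at hy
  have hyA : (⟨y, hyZ⟩ : Z) ∈ A := by
    by_contra hyA
    exact (hclosure hy.1).2 ⟨_, hyA, rfl⟩
  exact hy.2 (Metric.self_subset_thickening hη _ ⟨_, hyA, rfl⟩)

end Separation

section LinearReduction

lemma mem_maxGenEigenspace_of_sub_smul_mem {𝕜 M : Type*} [Field 𝕜] [AddCommGroup M]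
    [Module 𝕜 M] {f : Module.End 𝕜 M} {t : 𝕜} (ht : t ≠ 0) {v : M}
    (hv : v - t • f v ∈ f.maxGenEigenspace (1 / t)) : v ∈ f.maxGenEigenspace (1 / t) := by
  rw [Module.End.mem_maxGenEigenspace] at hv ⊢
  obtain ⟨n, hn⟩ := hv
  have hscale : (f - (1 / t) • (1 : Module.End 𝕜 M)) v = (-(1 / t)) • (v - t • f v) := by
    simp [smul_sub, smul_smul, ht, neg_add_eq_sub]
  exact ⟨n + 1, by rw [pow_succ, Module.End.mul_apply, hscale, map_smul, hn, smul_zero]⟩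

variable {E : Type*} [NormedAddCommGroup E] [NormedSpace ℝ E]

lemma IsCompactMap.isCompactOperator {S : E →L[ℝ] E} (hS : IsCompactMap S) :
    IsCompactOperator S := by
  obtain ⟨K, hK, hmaps⟩ := hS.exists_mapsTo _ (Metric.isBounded_ball (x := 0) (r := 1))
  exact ⟨K, hK, mem_of_superset (Metric.ball_mem_nhds 0 one_pos) hmaps⟩

lemma isUnit_one_sub_smul_comp_one_sub_proj [CompleteSpace E] {S : E →L[ℝ] E}
    (hS : IsCompactMap S) {t : ℝ} {N : Submodule ℝ E} (hN : ∀ v, v - t • S v ∈ N → v ∈ N)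
    {C : E →L[ℝ] N} (hC : ∀ v : N, C v = v) :
    IsUnit (1 - t • (S ∘L (1 - N.subtypeL ∘L C))) := by
  have hcompact : IsCompactOperator (t • (S ∘L (1 - N.subtypeL ∘L C))) :=
    (hS.isCompactOperator.comp_clm _).smul t
  have hnoteigen :
      ¬ Module.End.HasEigenvalue (t • (S ∘L (1 - N.subtypeL ∘L C)) : Module.End ℝ E) 1 := by
    intro heigen
    obtain ⟨v, hv, hv0⟩ := heigen.exists_hasEigenvector
    have hfix : t • S (v - C v) = v := by simpa using Module.End.mem_eigenspace_iff.1 hv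
    have hmem : v - C v ∈ N := hN _ (by rw [hfix, sub_sub_cancel_left]; exact N.neg_mem (C v).2)
    have hCv : v - C v = 0 := by
      simpa [hC] using congrArg Subtype.val (hC ⟨v - C v, hmem⟩).symm
    exact hv0 (by simpa [hCv] using hfix.symm)
  have hunit := (hcompact.hasEigenvalue_or_mem_resolventSet one_ne_zero).resolve_left hnoteigen
  rwa [spectrum.mem_resolventSet_iff, map_one] at hunit

lemma eq_zero_of_eq_comp_add_smul {N : Type*} [NormedAddCommGroup N] [NormedSpace ℝ N]
    [FiniteDimensional ℝ N] {B : N →L[ℝ] E} {C : E →L[ℝ] N} {D Q : E →L[ℝ] E} {t s a : ℝ}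
    (hdet : DetChangesSignAt ((C ∘L B : N →L[ℝ] N) : Module.End ℝ N) t) (hs : s ≠ t)
    (hQB : Q ∘L B = 0) (hDQ : D ∘L Q = D) (ha : |a| * ‖Q ∘L D‖ < 1) {u : E}
    (hu : u = s • B (C u) + a • D u) : u = 0 := by
  have hQu : Q u = a • (Q ∘L D) (Q u) := by
    have hQB' (v : N) : Q (B v) = 0 := congr($hQB v)
    have hDQ' : D (Q u) = D u := congr($hDQ u)
    simpa [hQB', hDQ'] using congrArg Q hu
  have hQu0 : Q u = 0 := by
    by_contra hne
    refine (mul_lt_of_lt_one_left (norm_pos_iff.2 hne) ha).not_ge ?_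
    calc ‖Q u‖ = |a| * ‖(Q ∘L D) (Q u)‖ := by rw [← Real.norm_eq_abs, ← norm_smul, ← hQu]
      _ ≤ |a| * (‖Q ∘L D‖ * ‖Q u‖) := by gcongr; exact (Q ∘L D).le_opNorm _
      _ = |a| * ‖Q ∘L D‖ * ‖Q u‖ := (mul_assoc _ _ _).symm
  have hDu : D u = 0 := by rw [← hDQ, ContinuousLinearMap.comp_apply, hQu0, map_zero]
  have hu' : u = s • B (C u) := by simpa [hDu] using hu
  have hCu : C u = 0 := hdet.eq_zero hs (sub_eq_zero.2 (by simpa using congrArg C hu'))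
  simpa [hCu] using hu'

lemma exists_forall_sub_smul_sub_smul_eq_zero {N : Type*} [NormedAddCommGroup N] [NormedSpace ℝ N]
    [FiniteDimensional ℝ N] {B : N →L[ℝ] E} {C : E →L[ℝ] N} {D Q : E →L[ℝ] E} {t : ℝ}
    (hdet : DetChangesSignAt ((C ∘L B : N →L[ℝ] N) : Module.End ℝ N) t)
    (hQB : Q ∘L B = 0) (hDQ : D ∘L Q = D) :
    ∃ ε₀ > 0, ∀ s, s ≠ t → |s - t| ≤ ε₀ → ∀ σ ∈ Set.Icc (0 : ℝ) 1, ∀ u,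
      u - s • B (C u) - (σ * (s - t)) • D u = 0 → u = 0 := by
  refine ⟨1 / (‖Q ∘L D‖ + 1), by positivity, fun s hst hs σ hσ u hu =>
    eq_zero_of_eq_comp_add_smul hdet hst hQB hDQ (a := σ * (s - t)) ?_
      (sub_eq_zero.1 (sub_sub u _ _ ▸ hu))⟩
  have ha : |σ * (s - t)| ≤ 1 / (‖Q ∘L D‖ + 1) := by
    rw [abs_mul, abs_of_nonneg hσ.1]
    exact (mul_le_of_le_one_left (abs_nonneg _) hσ.2).trans hs
  calc |σ * (s - t)| * ‖Q ∘L D‖ ≤ 1 / (‖Q ∘L D‖ + 1) * ‖Q ∘L D‖ := by gcongr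
    _ < 1 := by rw [one_div_mul_eq_div, div_lt_one (by positivity)]; exact lt_add_one _

variable [CompleteSpace E]

lemma exists_equiv_apply_sub_smul {S : E →L[ℝ] E} (hS : IsCompactMap S) {t : ℝ}
    {N : Submodule ℝ E} (hSN : Set.MapsTo S N N) (hN : ∀ v, v - t • S v ∈ N → v ∈ N)
    {C : E →L[ℝ] N} (hC : ∀ v : N, C v = v) :
    ∃ J : E ≃L[ℝ] E, ∀ s u,
      J (u - s • S u) = u - s • S (C u) - (s - t) • J (S (u - C u)) := by
  obtain ⟨L, hL⟩ := isUnit_one_sub_smul_comp_one_sub_proj hS hN hC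
  let J : E ≃L[ℝ] E := (ContinuousLinearEquiv.unitsEquiv ℝ E L).symm
  have hJ (u : E) : J (u - t • S (u - C u)) = u := (J.eq_symm_apply ..).1 congr($hL u).symm
  have hJN (v : N) : J v = v := by simpa [hC] using hJ v
  refine ⟨J, fun s u => ?_⟩
  have hsplit : u - s • S u =
      u - t • S (u - C u) - s • S (C u) - (s - t) • S (u - C u) := by
    rw [map_sub]
    module
  rw [hsplit, map_sub, map_sub, hJ, map_smul, map_smul, hJN ⟨_, hSN (C u).2⟩]

lemma exists_finiteRank_reduction {S : E →L[ℝ] E} (hS : IsCompactMap S) {t : ℝ} (ht : t ≠ 0)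
    (hodd : Odd (Module.finrank ℝ (Module.End.maxGenEigenspace (S : E →ₗ[ℝ] E) (1 / t)))) :
    ∃ (N : Submodule ℝ E) (_ : FiniteDimensional ℝ N) (B : N →L[ℝ] E) (C : E →L[ℝ] N)
      (D : E →L[ℝ] E) (J : E ≃L[ℝ] E),
      DetChangesSignAt ((C ∘L B : N →L[ℝ] N) : Module.End ℝ N) t ∧ IsCompactMap D ∧
      (∀ s u, J (u - s • S u) = u - s • B (C u) - (s - t) • D u) ∧
      ∃ ε₀ > 0, ∀ s, s ≠ t → |s - t| ≤ ε₀ → ∀ σ ∈ Set.Icc (0 : ℝ) 1, ∀ u,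
        u - s • B (C u) - (σ * (s - t)) • D u = 0 → u = 0 := by
  let N := Module.End.maxGenEigenspace (S : E →ₗ[ℝ] E) (1 / t)
  have : FiniteDimensional ℝ N := Module.finite_of_finrank_pos hodd.pos
  have hSN : Set.MapsTo S N N :=
    Module.End.mapsTo_maxGenEigenspace_of_comm (Commute.refl (S : E →ₗ[ℝ] E)) (1 / t)
  obtain ⟨C, hC⟩ : N.ClosedComplemented := .of_finiteDimensional N
  obtain ⟨J, hJ⟩ := exists_equiv_apply_sub_smul hS hSN
    (fun v => mem_maxGenEigenspace_of_sub_smul_mem ht) hC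
  let B : N →L[ℝ] E := S ∘L N.subtypeL
  let Q : E →L[ℝ] E := 1 - N.subtypeL ∘L C
  have hQN (v : N) : Q v = 0 := by simp [Q, hC]
  have hCB : ((C ∘L B : N →L[ℝ] N) : Module.End ℝ N) = (S : E →ₗ[ℝ] E).restrict hSN :=
    LinearMap.ext fun v => hC ⟨S v, hSN v.2⟩
  have hdet : DetChangesSignAt ((C ∘L B : N →L[ℝ] N) : Module.End ℝ N) t := hCB ▸
    detChangesSignAt_of_isNilpotent ht
      (isNilpotent_restrict_maxGenEigenspace_sub_algebraMap _ _ hSN) hodd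
  let D : E →L[ℝ] E := J ∘L S ∘L Q
  refine ⟨N, this, B, C, D, J, hdet,
    (hS.comp_lipschitzWith Q.lipschitz).continuous_comp J.continuous, hJ,
    exists_forall_sub_smul_sub_smul_eq_zero (Q := Q) hdet ?_ ?_⟩
  · exact ContinuousLinearMap.ext fun v => hQN ⟨_, hSN v.2⟩
  · ext u
    simp [D, Q, hC]

end LinearReduction

section Bifurcation

open Metric

lemma isLittleO_id_of_tendsto_norm_div_norm {E F : Type*} [NormedAddCommGroup E]
    [NormedSpace ℝ E] [Nontrivial E] [NormedAddCommGroup F] {G : E → F} (hG : ContinuousAt G 0)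
    (hsmall : Tendsto (fun u => ‖G u‖ / ‖u‖) (𝓝[≠] 0) (𝓝 0)) : G =o[𝓝 0] (id : E → E) := by
  have : (𝓝[≠] (0 : E)).NeBot := Module.punctured_nhds_neBot ℝ E 0
  have hpunctured : G =o[𝓝[≠] 0] (id : E → E) := by
    refine Asymptotics.isLittleO_norm_norm.1 ((Asymptotics.isLittleO_iff_tendsto' ?_).2 hsmall)
    filter_upwards [self_mem_nhdsWithin] with u hu h0
    exact absurd (norm_eq_zero.1 h0) hu
  have hG0 : G 0 = 0 := tendsto_nhds_unique (hG.mono_left nhdsWithin_le_nhds)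
    (hpunctured.trans_tendsto nhdsWithin_le_nhds)
  rw [← nhdsNE_sup_pure]
  exact hpunctured.sup (Asymptotics.isLittleO_pure.2 hG0)

lemma IsCompactMap.properSpace_of_forall_snd_eq {Y E : Type*} [MetricSpace Y] [ProperSpace Y]
    [NormedAddCommGroup E] {K : Y × E → E} (hK : IsCompactMap K) {Z : Set (Y × E)}
    (hZ : IsClosed Z) (hfix : ∀ x ∈ Z, x.2 = K x) : ProperSpace Z where
  isCompact_closedBall x r := by
    rw [Subtype.isCompact_iff]
    refine hK.isCompact_of_forall_snd_eq
      (hZ.isClosedEmbedding_subtypeVal.isClosedMap _ isClosed_closedBall)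
      (Bornology.isBounded_image_subtype_val.2 isBounded_closedBall) ?_
    rintro _ ⟨z, -, rfl⟩
    exact hfix z z.2

variable {E : Type*} [NormedAddCommGroup E] [NormedSpace ℝ E]

lemma exists_pos_forall_sub_smul_sub_smul_add_ne_zero {T D : E →L[ℝ] E} (hT : IsCompactMap T)
    (hD : IsCompactMap D) {H : E → E} (hH : H =o[𝓝 0] (id : E → E)) {t ε : ℝ}
    (hinj : ∀ s, dist s t = ε → ∀ σ ∈ Set.Icc (0 : ℝ) 1, ∀ u,
      u - s • T u - (σ * (s - t)) • D u = 0 → u = 0) :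
    ∃ ρ > 0, ∀ σ ∈ Set.Icc (0 : ℝ) 1, ∀ x : ℝ × E, dist x.1 t = ε → x.2 ≠ 0 → ‖x.2‖ < ρ →
      x.2 - x.1 • T x.2 - σ • ((x.1 - t) • D x.2 + H x.2) ≠ 0 := by
  let K : (ℝ × ℝ) × E → E := fun p => p.1.2 • T p.2 + (p.1.1 * (p.1.2 - t)) • D p.2
  have hK : IsCompactMap K :=
    ((isCompactMap_fst.continuous_comp continuous_snd).smul hT.comp_snd).add
      ((isCompactMap_fst.continuous_comp (g := fun y : ℝ × ℝ => y.1 * (y.2 - t))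
        (by fun_prop)).smul hD.comp_snd)
  obtain ⟨c, hc, hle⟩ := hK.exists_pos_forall_mul_norm_le
    (fun y a u => by simp only [K, map_smul]; module)
    (isCompact_Icc.prod (isCompact_sphere t ε))
    (fun y hy u hu => hinj y.2 hy.2 y.1 hy.1 u (sub_sub u _ _ ▸ hu))
  obtain ⟨ρ, hρ, hsmall⟩ := eventually_nhds_iff_ball.1 (hH.bound (half_pos hc))
  refine ⟨ρ, hρ, fun σ hσ x hx hx0 hxρ hzero => ?_⟩
  have hσH : x.2 - K ((σ, x.1), x.2) = σ • H x.2 := by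
    rw [← sub_eq_zero, ← hzero]
    module
  refine (mul_pos hc (norm_pos_iff.2 hx0)).not_ge ?_
  have hlower : c * ‖x.2‖ ≤ c / 2 * ‖x.2‖ := calc
    c * ‖x.2‖ ≤ ‖σ • H x.2‖ := hσH ▸ hle (σ, x.1) ⟨hσ, hx⟩ x.2
    _ = σ * ‖H x.2‖ := by rw [norm_smul, Real.norm_of_nonneg hσ.1]
    _ ≤ ‖H x.2‖ := mul_le_of_le_one_left (norm_nonneg _) hσ.2
    _ ≤ c / 2 * ‖x.2‖ := hsmall x.2 (mem_ball_zero_iff.2 hxρ)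
  linarith

/-- The solutions `(s, u)` of `u = s S(u) + G(u)` off the trivial line `u = 0`; the set `Σ` of the
theorem is its closure. -/
def nontrivialSolutions (S : E →L[ℝ] E) (G : E → E) : Set (ℝ × E) :=
  {p | p.2 = p.1 • S p.2 + G p.2 ∧ p.2 ≠ 0}

variable {S : E →L[ℝ] E} {G : E → E}

lemma snd_eq_of_mem_closure_nontrivialSolutions (hG : Continuous G) {x : ℝ × E}
    (hx : x ∈ closure (nontrivialSolutions S G)) : x.2 = x.1 • S x.2 + G x.2 := by
  have hclosed : IsClosed {x : ℝ × E | x.2 = x.1 • S x.2 + G x.2} :=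
    isClosed_eq (by fun_prop) (by fun_prop)
  exact closure_minimal (fun _ hp => hp.1) hclosed hx

lemma isCompactMap_fst_smul_add (hS : IsCompactMap S) (hG : IsCompactMap G) :
    IsCompactMap fun x : ℝ × E => x.1 • S x.2 + G x.2 :=
  (isCompactMap_fst.smul hS.comp_snd).add hG.comp_snd

lemma properSpace_closure_nontrivialSolutions_union (hS : IsCompactMap S) (hG : IsCompactMap G)
    (hG0 : G 0 = 0) (t : ℝ) :
    ProperSpace ↥(closure (nontrivialSolutions S G) ∪ {(t, 0)}) := by
  refine (isCompactMap_fst_smul_add hS hG).properSpace_of_forall_snd_eq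
    (isClosed_closure.union isClosed_singleton) ?_
  rintro x (hx | rfl)
  · exact snd_eq_of_mem_closure_nontrivialSolutions hG.continuous hx
  · simp [hG0]

lemma exists_eq_smul_of_mem_closure_nontrivialSolutions (hS : IsCompactMap S)
    (hG : G =o[𝓝 0] (id : E → E)) {s : ℝ} (hs : (s, 0) ∈ closure (nontrivialSolutions S G)) :
    ∃ u ≠ 0, u = s • S u := by
  by_contra! hcon
  have hK : IsCompactMap fun p : ℝ × E => p.1 • S p.2 := isCompactMap_fst.smul hS.comp_snd
  obtain ⟨c, hc, hle⟩ := hK.exists_pos_forall_mul_norm_le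
    (fun y a u => by rw [map_smul, smul_comm]) (isCompact_singleton (x := s))
    (fun y hy u hu => by_contra fun hu0 => hcon u hu0 (hy ▸ sub_eq_zero.1 hu))
  have hfst : (fun p : ℝ × E => p.1 - s) =o[𝓝 (s, 0)] (fun _ => (1 : ℝ)) := by
    rw [Asymptotics.isLittleO_one_iff, tendsto_sub_nhds_zero_iff]
    exact continuous_fst.tendsto (s, (0 : E))
  have hperturbation :
      (fun p : ℝ × E => (p.1 - s) • S p.2 + G p.2) =o[𝓝 (s, 0)] (fun p => p.2) := by
    refine .add ?_ (hG.comp_tendsto (continuous_snd.tendsto (s, (0 : E))))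
    simpa using hfst.smul_isBigO (S.isBigO_comp (fun p : ℝ × E => p.2) _)
  obtain ⟨p, ⟨hpeq, hp0⟩, hp⟩ := ((mem_closure_iff_frequently.1 hs).and_eventually
    (hperturbation.bound (half_pos hc))).exists
  have hresidual : p.2 - s • S p.2 = (p.1 - s) • S p.2 + G p.2 := by
    nth_rewrite 1 [hpeq]
    module
  have hlower : c * ‖p.2‖ ≤ c / 2 * ‖p.2‖ := (hle s rfl p.2).trans (hresidual ▸ hp)
  nlinarith [norm_pos_iff.2 hp0]

lemma hasEigenvalue_of_mem_closure_nontrivialSolutions (hS : IsCompactMap S)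
    (hG : G =o[𝓝 0] (id : E → E)) {s : ℝ} (hs : (s, 0) ∈ closure (nontrivialSolutions S G)) :
    Module.End.HasEigenvalue (S : E →ₗ[ℝ] E) (1 / s) := by
  obtain ⟨u, hu0, hu⟩ := exists_eq_smul_of_mem_closure_nontrivialSolutions hS hG hs
  have hs0 : s ≠ 0 := by
    rintro rfl
    exact hu0 (by rwa [zero_smul] at hu)
  refine Module.End.hasEigenvalue_of_hasEigenvector ⟨Module.End.mem_eigenspace_iff.2 ?_, hu0⟩
  rw [one_div, eq_inv_smul_iff₀ hs0]
  exact hu.symm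

lemma exists_pos_forall_le_norm_of_mem_nontrivialSolutions (hS : IsCompactMap S)
    (hG : IsCompactMap G) {A : Set (ℝ × E)} (hA : IsClosed A) (hAb : Bornology.IsBounded A)
    (htriv : ∀ s, (s, 0) ∈ A → (s, 0) ∉ closure (nontrivialSolutions S G)) :
    ∃ m > 0, ∀ x ∈ A, x ∈ nontrivialSolutions S G → m ≤ ‖x.2‖ := by
  have hcompact : IsCompact (A ∩ closure (nontrivialSolutions S G)) :=
    (isCompactMap_fst_smul_add hS hG).isCompact_of_forall_snd_eq (hA.inter isClosed_closure)
      (hAb.subset Set.inter_subset_left)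
      fun x hx => snd_eq_of_mem_closure_nontrivialSolutions hG.continuous hx.2
  obtain ⟨m, hm, hle⟩ := hcompact.exists_forall_le' (f := fun x : ℝ × E => ‖x.2‖) (a := 0)
    (by fun_prop) fun ⟨s, u⟩ hx => norm_pos_iff.2 <| by
      rintro rfl
      exact htriv s hx.1 hx.2
  exact ⟨m, hm, fun x hxA hx => hle x ⟨hxA, subset_closure hx⟩⟩

variable [CompleteSpace E]

lemma exists_mem_frontier_nontrivialSolutions (hS : IsCompactMap S) (hG : IsCompactMap G)
    (hGsmall : G =o[𝓝 0] (id : E → E)) {t : ℝ} (ht : t ≠ 0)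
    (hodd : Odd (Module.finrank ℝ (Module.End.maxGenEigenspace (S : E →ₗ[ℝ] E) (1 / t))))
    {Ω : Set (ℝ × E)} (hΩ : IsOpen Ω) (hΩb : Bornology.IsBounded Ω) (htΩ : (t, 0) ∈ Ω)
    (htriv : ∀ s ≠ t, (s, 0) ∈ closure Ω → (s, 0) ∉ closure (nontrivialSolutions S G)) :
    ∃ x ∈ frontier Ω, x ∈ nontrivialSolutions S G := by
  obtain ⟨N, _, B, C, D, J, hdet, hD, hJ, ε₀, hε₀, hinj⟩ := exists_finiteRank_reduction hS ht hodd
  obtain ⟨η, hη, hηΩ⟩ := isOpen_iff.1 hΩ _ htΩ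
  have hε : 0 < min ε₀ η := lt_min hε₀ hη
  obtain ⟨m, hm, hmle⟩ := exists_pos_forall_le_norm_of_mem_nontrivialSolutions hS hG
    (A := closure Ω \ Prod.fst ⁻¹' ball t (min ε₀ η))
    (isClosed_closure.sdiff (isOpen_ball.preimage continuous_fst))
    (hΩb.closure.subset Set.sdiff_subset)
    (fun s hs => htriv s (fun hst => hs.2 (by simpa [hst] using hε)) hs.1)
  have hT : IsCompactMap (B ∘L C) :=
    (isCompactMap_of_lipschitzWith C.lipschitz).continuous_comp B.continuous
  obtain ⟨ρ, hρ, hside⟩ := exists_pos_forall_sub_smul_sub_smul_add_ne_zero hT hD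
    ((J.isBigO_comp G _).trans_isLittleO hGsmall) (t := t) (ε := min ε₀ η)
    fun s hs => hinj s (dist_pos.1 (hs ▸ hε)) (hs.trans_le (min_le_left _ _))
  obtain ⟨r, hr, hrlt⟩ := exists_between (lt_min (lt_min hm hη) hρ)
  obtain ⟨⟨hrm, hrη⟩, hrρ⟩ := by simpa only [lt_min_iff] using hrlt
  have hR : IsCompactMap fun x : ℝ × E => (x.1 - t) • D x.2 + J (G x.2) :=
    ((isCompactMap_fst.continuous_comp (continuous_sub_right t)).smul hD.comp_snd).add
      (hG.continuous_comp J.continuous).comp_snd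
  have hboxΩ : ball t (min ε₀ η) ×ˢ ball 0 η ⊆ Ω :=
    (Set.prod_mono_left (ball_subset_ball (min_le_right _ _))).trans
      ((ball_prod_same t 0 η).trans_subset hηΩ)
  obtain ⟨x, hx, hxΩ⟩ := exists_zero_of_detChangesSignAt_comp hR hΩ hΩb hε hr hrη hdet hboxΩ
    fun σ hσ x hxε hxr => hside σ hσ x hxε (norm_pos_iff.1 (hxr ▸ hr)) (hxr ▸ hrρ)
  have hsol : x.2 = x.1 • S x.2 + G x.2 := by
    rw [← sub_eq_zero, ← J.map_eq_zero_iff, ← sub_sub, map_sub, hJ, ← hx]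
    abel
  rcases hxΩ with ⟨hfrontier, hle⟩ | ⟨⟨hclosure, hbox⟩, hxr⟩
  · exact ⟨x, hfrontier, hsol, norm_pos_iff.1 (hr.trans_le hle)⟩
  · refine absurd (hmle x ⟨hclosure, fun h => hbox ⟨h, ?_⟩⟩
      ⟨hsol, norm_pos_iff.1 (hxr ▸ hr)⟩) (hxr ▸ hrm).not_ge
    exact mem_ball_zero_iff.2 (hxr ▸ hrη)

lemma exists_pos_forall_eq_zero_of_eq_smul (hS : IsCompactMap S) {t : ℝ} (ht : t ≠ 0)
    (hodd : Odd (Module.finrank ℝ (Module.End.maxGenEigenspace (S : E →ₗ[ℝ] E) (1 / t)))) :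
    ∃ ε > 0, ∀ s ≠ t, |s - t| ≤ ε → ∀ u, u = s • S u → u = 0 := by
  obtain ⟨_, _, _, _, _, _, _, _, hJ, ε, hε, hinj⟩ := exists_finiteRank_reduction hS ht hodd
  refine ⟨ε, hε, fun s hs hsε u hu => hinj s hs hsε 1 ⟨zero_le_one, le_rfl⟩ u ?_⟩
  rw [one_mul, ← hJ, sub_eq_zero.2 hu, map_zero]

lemma isClosed_closure_nontrivialSolutions_inter_trivial (hS : IsCompactMap S)
    (hG : G =o[𝓝 0] (id : E → E)) {t : ℝ} (ht : t ≠ 0)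
    (hodd : Odd (Module.finrank ℝ (Module.End.maxGenEigenspace (S : E →ₗ[ℝ] E) (1 / t)))) :
    IsClosed (closure (nontrivialSolutions S G) ∩ {t}ᶜ ×ˢ {0}) := by
  obtain ⟨ε, hε, hzero⟩ := exists_pos_forall_eq_zero_of_eq_smul hS ht hodd
  have hisolated : closure (nontrivialSolutions S G) ∩ {t}ᶜ ×ˢ {0} =
      closure (nontrivialSolutions S G) ∩ (ball t ε)ᶜ ×ˢ {0} := by
    ext ⟨s, u⟩
    refine and_congr_right fun hx => and_congr_left fun (hu : u = 0) => ⟨fun hst hs => ?_, ?_⟩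
    · subst hu
      obtain ⟨v, hv0, hv⟩ := exists_eq_smul_of_mem_closure_nontrivialSolutions hS hG hx
      exact hv0 (hzero s hst (mem_ball.1 hs).le v hv)
    · rintro hs rfl
      exact hs (mem_ball_self hε)
  rw [hisolated]
  exact isClosed_closure.inter (isOpen_ball.isClosed_compl.prod isClosed_singleton)

end Bifurcation

/-- Rabinowitz global bifurcation theorem. If S is a compact linear
operator on a Banach space E, 1/t is an eigenvalue of S of odd algebraic
multiplicity, G is a compact continuous map with ‖G(u)‖/‖u‖ → 0 as ‖u‖ → 0, and
Σ is the closure of the nontrivial solution set of u = s·S(u) + G(u), then the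
connected component C of Σ ∪ {(t,0)} containing (t,0) is unbounded, or contains
some (t̂,0) with t̂ ≠ t and 1/t̂ an eigenvalue of S. -/
theorem rabinowitz_global_bifurcation
    (E : Type*) [NormedAddCommGroup E] [NormedSpace ℝ E] [CompleteSpace E]
    (S : E →L[ℝ] E)
    (hScompact : ∀ s : Set E, Bornology.IsBounded s → IsCompact (closure (S '' s)))
    (t : ℝ) (ht : t ≠ 0)
    (heigen : Module.End.HasEigenvalue (S : E →ₗ[ℝ] E) (1 / t))
    (hodd : Odd (Module.finrank ℝ
      (Module.End.maxGenEigenspace (S : E →ₗ[ℝ] E) (1 / t))))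
    (G : E → E) (hGcont : Continuous G)
    (hGcompact : ∀ s : Set E, Bornology.IsBounded s → IsCompact (closure (G '' s)))
    (hGsmall : Tendsto (fun u : E => ‖G u‖ / ‖u‖) (𝓝[≠] (0 : E)) (𝓝 0))
    (Sig : Set (ℝ × E))
    (hSig : Sig = closure {p : ℝ × E | p.2 = p.1 • S p.2 + G p.2 ∧ p.2 ≠ 0})
    (C : Set (ℝ × E))
    (hC : C = connectedComponentIn (Sig ∪ {(t, (0 : E))}) (t, (0 : E))) :
    ¬ Bornology.IsBounded C ∨
      ∃ that : ℝ, that ≠ t ∧ (that, (0 : E)) ∈ C ∧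
        Module.End.HasEigenvalue (S : E →ₗ[ℝ] E) (1 / that) := by
  have : Nontrivial E := ⟨_, 0, heigen.exists_hasEigenvector.choose_spec.2⟩
  have hS : IsCompactMap S := isCompactMap_of_isCompact_closure_image S.continuous hScompact
  have hG : IsCompactMap G := isCompactMap_of_isCompact_closure_image hGcont hGcompact
  have hGo : G =o[𝓝 0] (id : E → E) :=
    isLittleO_id_of_tendsto_norm_div_norm hGcont.continuousAt hGsmall
  have hG0 : G 0 = 0 := by simpa using (hGo.bound one_pos).self_of_nhds
  have : ProperSpace ↥(closure (nontrivialSolutions S G) ∪ {(t, 0)}) :=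
    properSpace_closure_nontrivialSolutions_union hS hG hG0 t
  change Sig = closure (nontrivialSolutions S G) at hSig
  subst hSig hC
  by_contra! hcon
  obtain ⟨hbounded, hno⟩ := hcon
  obtain ⟨Ω, hΩ, hΩb, htΩ, hclosure, hfrontier⟩ :=
    exists_isOpen_isolating_of_isBounded_connectedComponentIn (.inr rfl) hbounded
      (isClosed_closure_nontrivialSolutions_inter_trivial hS hGo ht hodd).isOpen_compl
      (by
        rintro ⟨s, u⟩ hC ⟨hs, hst, rfl⟩
        exact hno s hst hC (hasEigenvalue_of_mem_closure_nontrivialSolutions hS hGo hs))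
  obtain ⟨x, hxΩ, hx⟩ := exists_mem_frontier_nontrivialSolutions hS hG hGo ht hodd hΩ hΩb htΩ
    fun s hst hs hmem => hclosure hs ⟨hmem, hst, rfl⟩
  exact hfrontier.notMem_of_mem_left hxΩ (.inl (subset_closure hx))
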